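/- arXiv:2507.20303 — 2 statements merged into one kernel-verified Lean document; each statement's English description precedes it below -/
import Mathlib

section
/- Let Λ = ω₁ℤ + ω₂ℤ with ω₁ > 0 real, Im ω₂ > 0, and ω₁·Im ω₂ = π/2. There exists a constant K > 1, depending only on Λ, such that for every integer N ≥ 1 and every real β > 0, the torus packing number satisfies 1 ≤ Θ_{N,β}(ℂ/Λ) ≤ K^β. -/
open MeasureTheory

/-- The lattice `Λ = ω₁ℤ + ω₂ℤ` as a subset of `ℂ`. -/
def latticeSet (ω₁ ω₂ : ℂ) : Set ℂ :=
  {w : ℂ | ∃ m n : ℤ, w = (m : ℂ) * ω₁ + (n : ℂ) * ω₂}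

/-- The Weierstrass sigma function of the lattice `ω₁ℤ + ω₂ℤ`. -/
noncomputable def wSigma (ω₁ ω₂ : ℂ) (z : ℂ) : ℂ :=
  z * ∏' p : {p : ℤ × ℤ // p ≠ 0},
      (1 - z / ((p.1.1 : ℂ) * ω₁ + (p.1.2 : ℂ) * ω₂)) *
        Complex.exp (z / ((p.1.1 : ℂ) * ω₁ + (p.1.2 : ℂ) * ω₂) +
          z ^ 2 / (2 * ((p.1.1 : ℂ) * ω₁ + (p.1.2 : ℂ) * ω₂) ^ 2))

/-- The Weierstrass zeta function `ζ = σ'/σ`. -/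
noncomputable def wZeta (ω₁ ω₂ : ℂ) (z : ℂ) : ℂ :=
  deriv (wSigma ω₁ ω₂) z / wSigma ω₁ ω₂ z

/-- The quasi-period `λ₁ = 2ζ(ω₁/2)`. -/
noncomputable def lambda1 (ω₁ ω₂ : ℂ) : ℂ := 2 * wZeta ω₁ ω₂ (ω₁ / 2)

/-- The constant `b = 1 − λ₁/(2ω₁)`. -/
noncomputable def bconst (ω₁ ω₂ : ℂ) : ℂ := 1 - lambda1 ω₁ ω₂ / (2 * ω₁)

/-- The modified Weierstrass sigma function `σ_*(z) = e^{b z²} σ(z)`. -/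
noncomputable def sigmaStar (ω₁ ω₂ : ℂ) (z : ℂ) : ℂ :=
  Complex.exp (bconst ω₁ ω₂ * z ^ 2) * wSigma ω₁ ω₂ z

/-- A fundamental domain of the lattice `ω₁ℤ + ω₂ℤ`. -/
def fundDomain (ω₁ ω₂ : ℂ) : Set ℂ :=
  (fun p : ℝ × ℝ => (p.1 : ℂ) * ω₁ + (p.2 : ℂ) * ω₂) ''
    (Set.Ico (0 : ℝ) 1 ×ˢ Set.Ico (0 : ℝ) 1)

/-- The normalizing constant `A_Λ`. -/
noncomputable def Aconst (ω₁ ω₂ : ℂ) : ℝ :=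
  2 / Real.pi * ∫ z in fundDomain ω₁ ω₂, (Real.log ‖sigmaStar ω₁ ω₂ z‖ - ‖z‖ ^ 2)

/-- The unipolar Green function of the torus `ℂ/Λ`. -/
noncomputable def Utorus (ω₁ ω₂ : ℂ) (z w : ℂ) : ℝ :=
  Real.log ‖sigmaStar ω₁ ω₂ (z - w)‖ - ‖z - w‖ ^ 2 - Aconst ω₁ ω₂

/-- The monic first degree pseudopolynomial on the torus with root `α`. -/
noncomputable def pseudoPoly (ω₁ ω₂ : ℂ) (α z : ℂ) : ℂ :=
  Complex.exp (2 * Complex.I * ((((starRingEnd ℂ) α) * z).im : ℂ)) *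
    (Complex.exp (-((‖z - α‖ ^ 2 : ℝ) : ℂ)) * sigmaStar ω₁ ω₂ (z - α))

/-- The torus packing number `Θ_{N,β}(ℂ/Λ)`. -/
noncomputable def ThetaTorus (ω₁ ω₂ : ℂ) (N : ℕ) (β : ℝ) : ℝ :=
  ⨅ w : Fin N → ℂ,
    2 / Real.pi *
      ∫ z in fundDomain ω₁ ω₂, Real.exp (∑ j, β * Utorus ω₁ ω₂ z (w j))


/-! ### Part A : the sigma function -/
section SigmaPart

open Filter Topology Complex

abbrev NZ : Type := {p : ℤ × ℤ // p ≠ 0}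

noncomputable def lw (L : PeriodPair) (p : NZ) : ℂ := (p.1.1 : ℂ) * L.ω₁ + (p.1.2 : ℂ) * L.ω₂

noncomputable def Ef (w z : ℂ) : ℂ := (1 - z / w) * Complex.exp (z / w + z ^ 2 / (2 * w ^ 2))

noncomputable def gl (u : ℂ) : ℂ := Complex.log (1 - u) + u + u ^ 2 / 2

noncomputable def Pr (L : PeriodPair) (z : ℂ) : ℂ := ∏' p : NZ, Ef (lw L p) z

lemma wSigma_eq (L : PeriodPair) (z : ℂ) : wSigma L.ω₁ L.ω₂ z = z * Pr L z := rfl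

lemma lw_mem (L : PeriodPair) (p : NZ) : lw L p ∈ L.lattice :=
  PeriodPair.mem_lattice.2 ⟨_, _, rfl⟩

lemma lw_eq (L : PeriodPair) (p : NZ) : lw L p = (L.latticeEquivProd.symm p.1).1 :=
  (L.latticeEquiv_symm_apply p.1).symm

lemma lw_ne (L : PeriodPair) (p : NZ) : lw L p ≠ 0 := by
  rw [lw_eq]
  intro h
  apply p.2
  have : L.latticeEquivProd.symm p.1 = 0 := Subtype.ext h
  simpa using this

lemma exists_lw (L : PeriodPair) {z : ℂ} (hz : z ∈ L.lattice) (h0 : z ≠ 0) : ∃ p, lw L p = z := by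
  obtain ⟨m, n, h⟩ := PeriodPair.mem_lattice.1 hz
  refine ⟨⟨(m, n), ?_⟩, h⟩
  intro h'
  simp only [Prod.mk_eq_zero] at h'
  apply h0
  rw [← h, h'.1, h'.2]; simp

lemma summable_lw (L : PeriodPair) : Summable fun p : NZ => ‖lw L p‖⁻¹ ^ 3 := by
  have h := ZLattice.summable_norm_pow_inv L.lattice 3 (by simp)
  have h2 := (L.latticeEquivProd.symm.toEquiv.summable_iff.2 h).subtype {p | p ≠ 0}
  refine h2.congr fun p => ?_
  simp only [Function.comp]
  rw [lw_eq]
  rfl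

lemma gl_bound {u : ℂ} (hu : ‖u‖ ≤ 1 / 2) : ‖gl u‖ ≤ ‖u‖ ^ 3 := by
  have h := Complex.norm_log_sub_logTaylor_le 2 (z := -u) (by rw [norm_neg]; linarith)
  have e : log (1 + -u) - logTaylor (2 + 1) (-u) = gl u := by
    simp [logTaylor_succ, logTaylor_zero, gl]; ring_nf
  rw [e, norm_neg] at h
  refine h.trans ?_
  have h3 : (1 - ‖u‖)⁻¹ ≤ 2 := by
    rw [inv_le_comm₀ (by linarith) (by norm_num)]; linarith
  have : 0 ≤ ‖u‖ ^ 3 := by positivity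
  norm_num
  nlinarith

lemma exp_gl {u : ℂ} (hu : u ≠ 1) : Complex.exp (gl u) = (1 - u) * Complex.exp (u + u ^ 2 / 2) := by
  rw [gl, add_assoc, Complex.exp_add, Complex.exp_log (sub_ne_zero.2 hu.symm)]

lemma Ef_eq (w z : ℂ) (h : z / w ≠ 1) : Ef w z = Complex.exp (gl (z / w)) := by
  rw [exp_gl h, Ef]; congr 3; rw [div_pow, div_div, mul_comm]

lemma Ef_bound {w z : ℂ} (hu : ‖z / w‖ ≤ 1 / 2) : ‖Ef w z - 1‖ ≤ 2 * ‖z / w‖ ^ 3 := by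
  have h1 := gl_bound hu
  have h0 : ‖z / w‖ ^ 3 ≤ 1 := pow_le_one₀ (norm_nonneg _) (by linarith)
  rw [Ef_eq w z (by rintro h; rw [h] at hu; norm_num at hu)]
  exact (Complex.norm_exp_sub_one_le (h1.trans h0)).trans (by linarith)

lemma eventually_half (L : PeriodPair) (R : ℝ) :
    ∀ᶠ p : NZ in cofinite, ∀ z : ℂ, ‖z‖ ≤ R → ‖z / lw L p‖ ≤ 1 / 2 := by
  have h := (summable_lw L).tendsto_cofinite_zero
  have hpos : (0:ℝ) < (1 / (2 * (|R| + 1))) ^ 3 := by positivity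
  filter_upwards [h.eventually_le_const hpos] with p hp z hz
  have h1 : ‖lw L p‖⁻¹ ≤ 1 / (2 * (|R| + 1)) := le_of_pow_le_pow_left₀ (by norm_num) (by positivity) hp
  rw [norm_div, div_eq_mul_inv]
  calc ‖z‖ * ‖lw L p‖⁻¹ ≤ (|R| + 1) * (1 / (2 * (|R| + 1))) := by
        gcongr; exact hz.trans ((le_abs_self R).trans (by linarith))
    _ = 1 / 2 := by field_simp

lemma bound_aux (L : PeriodPair) (R : ℝ) (p : NZ) (z : ℂ) (hz : ‖z‖ ≤ R) :
    ‖z / lw L p‖ ^ 3 ≤ R ^ 3 * ‖lw L p‖⁻¹ ^ 3 := by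
  rw [norm_div, div_eq_mul_inv, mul_pow]
  gcongr

lemma differentiable_Ef (w : ℂ) : Differentiable ℂ (Ef w) := by
  unfold Ef; fun_prop

lemma hasProd_Ef (L : PeriodPair) :
    HasProdLocallyUniformlyOn (fun p z => Ef (lw L p) z) (Pr L) Set.univ := by
  apply hasProdLocallyUniformlyOn_of_forall_compact isOpen_univ
  intro S _ hS
  obtain ⟨R, hR⟩ := hS.isBounded.exists_norm_le
  have := Summable.hasProdUniformlyOn_one_add (f := fun p z => Ef (lw L p) z - 1) hS
    (((summable_lw L).mul_left (R ^ 3)).mul_left 2) (by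
      filter_upwards [eventually_half L R] with p hp z hz
      exact (Ef_bound (hp z (hR z hz))).trans (by linarith [bound_aux L R p z (hR z hz)]))
    (fun p => ((differentiable_Ef _).continuous.sub continuous_const).continuousOn)
  simp only [add_sub_cancel] at this
  exact this

lemma differentiable_Pr (L : PeriodPair) : Differentiable ℂ (Pr L) := by
  rw [← differentiableOn_univ]
  refine (hasProdLocallyUniformlyOn_iff_tendstoLocallyUniformlyOn.1 (hasProd_Ef L)).differentiableOn
    (.of_forall fun S => ?_) isOpen_univ
  have : Differentiable ℂ (fun z => ∏ p ∈ S, Ef (lw L p) z) :=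
    Differentiable.fun_finsetProd fun p _ => differentiable_Ef _
  exact this.differentiableOn

lemma Ef_ne {w z : ℂ} (hw : w ≠ 0) (h : z ≠ w) : Ef w z ≠ 0 := by
  have : z / w ≠ 1 := by rwa [Ne, div_eq_one_iff_eq hw]
  rw [Ef_eq w z this]; exact Complex.exp_ne_zero _

lemma Pr_ne (L : PeriodPair) {z : ℂ} (hz : ∀ p, z ≠ lw L p) : Pr L z ≠ 0 := by
  have := tprod_one_add_ne_zero_of_summable (f := fun p => Ef (lw L p) z - 1)
    (fun p => by simpa using Ef_ne (lw_ne L p) (hz p)) (by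
      refine Summable.of_norm_bounded_eventually
        (((summable_lw L).mul_left (‖z‖ ^ 3)).mul_left 2) ?_
      filter_upwards [eventually_half L ‖z‖] with p hp
      rw [norm_norm]
      exact (Ef_bound (hp z le_rfl)).trans (by linarith [bound_aux L ‖z‖ p z le_rfl]))
  simpa [Pr] using this

lemma Pr_zero (L : PeriodPair) : Pr L 0 = 1 := by
  simp [Pr, Ef]

lemma Pr_neg (L : PeriodPair) (z : ℂ) : Pr L (-z) = Pr L z := by
  let e : NZ ≃ NZ := (Equiv.neg (ℤ × ℤ)).subtypeEquiv (by simp)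
  rw [Pr, Pr, ← e.tprod_eq]
  refine tprod_congr fun p => ?_
  have : lw L (e p) = - lw L p := by
    simp [lw, e]; ring
  rw [this, Ef, Ef]; simp

lemma wSigma_neg (L : PeriodPair) (z : ℂ) : wSigma L.ω₁ L.ω₂ (-z) = - wSigma L.ω₁ L.ω₂ z := by
  rw [wSigma_eq, wSigma_eq, Pr_neg]; ring

lemma differentiable_wSigma (L : PeriodPair) : Differentiable ℂ (wSigma L.ω₁ L.ω₂) := by
  have : wSigma L.ω₁ L.ω₂ = fun z => z * Pr L z := rfl
  rw [this]
  exact differentiable_id.mul (differentiable_Pr L)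

lemma wSigma_ne (L : PeriodPair) {z : ℂ} (hz : z ∉ L.lattice) : wSigma L.ω₁ L.ω₂ z ≠ 0 := by
  rw [wSigma_eq]
  refine mul_ne_zero (by rintro rfl; exact hz (zero_mem _)) (Pr_ne L fun p h => hz (h ▸ lw_mem L p))

lemma wSigma_zero (L : PeriodPair) : wSigma L.ω₁ L.ω₂ 0 = 0 := by simp [wSigma_eq]

lemma deriv_wSigma_zero (L : PeriodPair) : deriv (wSigma L.ω₁ L.ω₂) 0 = 1 := by
  have : HasDerivAt (fun z => z * Pr L z) (1 * Pr L 0 + 0 * deriv (Pr L) 0) 0 :=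
    (hasDerivAt_id (0:ℂ)).mul (differentiable_Pr L 0).hasDerivAt
  have h2 := this.deriv
  rw [Pr_zero] at h2
  have e : wSigma L.ω₁ L.ω₂ = fun z => z * Pr L z := rfl
  rw [e, h2]; simp

end SigmaPart


section SigmaPart2

open Filter Topology Complex

noncomputable def PrS (L : PeriodPair) (S : Finset NZ) (z : ℂ) : ℂ := ∏ p ∈ S, Ef (lw L p) z

lemma differentiable_PrS (L : PeriodPair) (S : Finset NZ) : Differentiable ℂ (PrS L S) :=
  Differentiable.fun_finsetProd fun _ _ => differentiable_Ef _

lemma deriv_differentiable {f : ℂ → ℂ} (hf : Differentiable ℂ f) : Differentiable ℂ (deriv f) :=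
  fun z => (hf.analyticAt z).deriv.differentiableAt

lemma tendsto_PrS (L : PeriodPair) :
    TendstoLocallyUniformlyOn (PrS L) (Pr L) atTop Set.univ :=
  hasProdLocallyUniformlyOn_iff_tendstoLocallyUniformlyOn.1 (hasProd_Ef L)

lemma tendsto_PrS' (L : PeriodPair) :
    TendstoLocallyUniformlyOn (fun S => deriv (PrS L S)) (deriv (Pr L)) atTop Set.univ :=
  (tendsto_PrS L).deriv (.of_forall fun S => (differentiable_PrS L S).differentiableOn) isOpen_univ

lemma tendsto_PrS'' (L : PeriodPair) :
    TendstoLocallyUniformlyOn (fun S => deriv (deriv (PrS L S))) (deriv (deriv (Pr L))) atTop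
      Set.univ :=
  (tendsto_PrS' L).deriv
    (.of_forall fun S => (deriv_differentiable (differentiable_PrS L S)).differentiableOn) isOpen_univ

lemma hasDerivAt_logDeriv' {f : ℂ → ℂ} (hf : Differentiable ℂ f) {z : ℂ} (hz : f z ≠ 0) :
    HasDerivAt (logDeriv f) ((deriv (deriv f) z * f z - deriv f z * deriv f z) / f z ^ 2) z :=
  (deriv_differentiable hf z).hasDerivAt.div (hf z).hasDerivAt hz

lemma logDeriv_Ef {w z : ℂ} (hw : w ≠ 0) (h : z ≠ w) :
    logDeriv (Ef w) z = 1 / (z - w) + 1 / w + z / w ^ 2 := by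
  have h1 : HasDerivAt (Ef w) ((-(1 / w)) * Complex.exp (z / w + z ^ 2 / (2 * w ^ 2)) +
      (1 - z / w) * (Complex.exp (z / w + z ^ 2 / (2 * w ^ 2)) *
        (1 / w + (2 * z) / (2 * w ^ 2)))) z := by
    apply HasDerivAt.mul
    · exact ((hasDerivAt_id z).div_const w).const_sub 1
    · apply HasDerivAt.cexp
      apply ((hasDerivAt_id z).div_const w).add
      simpa using (hasDerivAt_pow 2 z).div_const (2 * w ^ 2)
  rw [logDeriv_apply, h1.deriv]
  have h2 : z - w ≠ 0 := sub_ne_zero.2 h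
  have h3 : (1 - z / w) ≠ 0 := by
    rw [Ne, sub_eq_zero, eq_comm, div_eq_one_iff_eq hw]; exact h
  have h4 : w - z ≠ 0 := sub_ne_zero.2 h.symm
  have h5 := Complex.exp_ne_zero (z / w + z ^ 2 / (2 * w ^ 2))
  rw [Ef]
  generalize Complex.exp (z / w + z ^ 2 / (2 * w ^ 2)) = e at h5 ⊢
  have h6 : z - w = - (w - z) := by ring
  rw [h6]
  have h7 : (1 - z / w) = (w - z) / w := by field_simp
  rw [h7]
  field_simp
  ring

lemma notMem_ne (L : PeriodPair) {z : ℂ} (hz : z ∉ L.lattice) (p : NZ) : z ≠ lw L p :=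
  fun h => hz (h ▸ lw_mem L p)

lemma logDeriv_PrS (L : PeriodPair) (S : Finset NZ) {z : ℂ} (hz : z ∉ L.lattice) :
    logDeriv (PrS L S) z = ∑ p ∈ S, (1 / (z - lw L p) + 1 / lw L p + z / lw L p ^ 2) := by
  have := logDeriv_prod (s := S) (f := fun p => Ef (lw L p)) (x := z)
    (fun p _ => Ef_ne (lw_ne L p) (notMem_ne L hz p)) (fun p _ => differentiable_Ef _ z)
  unfold PrS
  rw [this]
  exact Finset.sum_congr rfl fun p _ => logDeriv_Ef (lw_ne L p) (notMem_ne L hz p)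

lemma isOpen_compl (L : PeriodPair) : IsOpen ((L.lattice : Set ℂ)ᶜ) := L.isClosed_lattice.isOpen_compl

lemma deriv_logDeriv_PrS (L : PeriodPair) (S : Finset NZ) {z : ℂ} (hz : z ∉ L.lattice) :
    deriv (logDeriv (PrS L S)) z = ∑ p ∈ S, (- (1 / (z - lw L p) ^ 2 - 1 / lw L p ^ 2)) := by
  have h1 : logDeriv (PrS L S) =ᶠ[𝓝 z]
      fun z => ∑ p ∈ S, (1 / (z - lw L p) + 1 / lw L p + z / lw L p ^ 2) := by
    filter_upwards [(isOpen_compl L).mem_nhds hz] with y hy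
    exact logDeriv_PrS L S hy
  rw [h1.deriv_eq]
  apply HasDerivAt.deriv
  apply HasDerivAt.fun_sum
  intro p _
  have h2 : z - lw L p ≠ 0 := sub_ne_zero.2 (notMem_ne L hz p)
  have h3 : HasDerivAt (fun y => 1 / (y - lw L p)) (-1 / (z - lw L p) ^ 2) z := by
    simpa using (((hasDerivAt_id z).sub_const (lw L p)).fun_inv h2)
  have h4 := (h3.add_const (1 / lw L p)).add ((hasDerivAt_id z).div_const (lw L p ^ 2))
  refine h4.congr_deriv ?_
  ring

lemma wp_eq (L : PeriodPair) (z : ℂ) :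
    HasSum (fun p : NZ => (1 / (z - lw L p) ^ 2 - 1 / lw L p ^ 2)) (L.weierstrassP z - 1 / z ^ 2) := by
  have h := L.hasSum_weierstrassP z
  rw [← L.latticeEquivProd.symm.toEquiv.hasSum_iff] at h
  have h2 := h.update (0 : ℤ × ℤ) 0
  rw [← (Subtype.val_injective (p := fun p : ℤ × ℤ => p ≠ 0)).hasSum_iff] at h2
  · have e : (L.weierstrassP z - 1 / z ^ 2) = 0 - ((fun l : L.lattice => (1 / (z - (l : ℂ)) ^ 2 - 1 / (l : ℂ) ^ 2)) ∘
      L.latticeEquivProd.symm.toEquiv) 0 + L.weierstrassP z := by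
      simp only [Function.comp, LinearEquiv.coe_toEquiv, map_zero]
      simp
      ring_nf
    rw [e]
    suffices e2 : (fun p : NZ => (1 / (z - lw L p) ^ 2 - 1 / lw L p ^ 2)) = _ ∘ Subtype.val by
      rw [e2]; exact h2
    funext p
    have hp : p.1 ≠ 0 := p.2
    simp only [Function.comp, Function.update_of_ne hp]
    rw [lw_eq]; rfl
  · intro p hp
    have h0 : p = 0 := by
      by_contra h0
      exact hp ⟨⟨p, h0⟩, rfl⟩
    rw [h0]
    simp

lemma deriv_logDeriv_Pr (L : PeriodPair) {z : ℂ} (hz : z ∉ L.lattice) :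
    deriv (logDeriv (Pr L)) z = 1 / z ^ 2 - L.weierstrassP z := by
  have hP : Pr L z ≠ 0 := Pr_ne L (notMem_ne L hz)
  have hS : ∀ S, PrS L S z ≠ 0 := fun S =>
    Finset.prod_ne_zero_iff.2 fun p _ => Ef_ne (lw_ne L p) (notMem_ne L hz p)
  have t0 := (tendsto_PrS L).tendsto_at (Set.mem_univ z)
  have t1 := (tendsto_PrS' L).tendsto_at (Set.mem_univ z)
  have t2 := (tendsto_PrS'' L).tendsto_at (Set.mem_univ z)
  have t := ((t2.mul t0).sub (t1.mul t1)).div (t0.pow 2) (pow_ne_zero 2 hP)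
  rw [(hasDerivAt_logDeriv' (differentiable_Pr L) hP).deriv]
  have hs := (wp_eq L z).neg
  refine tendsto_nhds_unique t ?_
  have e : 1 / z ^ 2 - L.weierstrassP z = -(L.weierstrassP z - 1 / z ^ 2) := by ring
  rw [e]
  refine Tendsto.congr (fun S => ?_) hs
  change ∑ p ∈ S, _ = _
  rw [← deriv_logDeriv_PrS L S hz, (hasDerivAt_logDeriv' (differentiable_PrS L S) (hS S)).deriv]
  rfl

lemma hasDerivAt_wZeta (L : PeriodPair) {z : ℂ} (hz : z ∉ L.lattice) :
    HasDerivAt (wZeta L.ω₁ L.ω₂) (- L.weierstrassP z) z := by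
  have h1 : wZeta L.ω₁ L.ω₂ =ᶠ[𝓝 z] fun y => 1 / y + logDeriv (Pr L) y := by
    filter_upwards [(isOpen_compl L).mem_nhds hz] with y hy
    have hy0 : y ≠ 0 := by rintro rfl; exact hy (zero_mem _)
    have := logDeriv_mul y hy0 (Pr_ne L (notMem_ne L hy)) differentiableAt_id (differentiable_Pr L y)
      (f := id)
    rw [logDeriv_id] at this
    exact this
  have hz0 : z ≠ 0 := by rintro rfl; exact hz (zero_mem _)
  have h2 : HasDerivAt (fun y : ℂ => 1 / y) (-1 / z ^ 2) z := by
    simpa [neg_div] using hasDerivAt_inv hz0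
  have h3 := (hasDerivAt_logDeriv' (differentiable_Pr L) (Pr_ne L (notMem_ne L hz))).differentiableAt.hasDerivAt
  rw [deriv_logDeriv_Pr L hz] at h3
  refine ((h2.add h3).congr_of_eventuallyEq h1).congr_deriv ?_
  ring

lemma preconn (L : PeriodPair) : IsPreconnected ((L.lattice : Set ℂ)ᶜ) := by
  have hc : (L.lattice : Set ℂ).Countable := by
    have : Countable L.lattice := L.latticeEquivProd.toEquiv.injective.countable
    exact Set.to_countable _
  exact (hc.isConnected_compl_of_one_lt_rank (by rw [Complex.rank_real_complex]; norm_num)).isPreconnected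

lemma eqOn_const {U : Set ℂ} (hU : IsOpen U) (hc : IsPreconnected U) {f : ℂ → ℂ}
    (hf : ∀ z ∈ U, HasDerivAt f 0 z) {x y : ℂ} (hx : x ∈ U) (hy : y ∈ U) : f x = f y :=
  hU.is_const_of_deriv_eq_zero hc (fun z hz => (hf z hz).differentiableAt.differentiableWithinAt)
    (fun z hz => (hf z hz).deriv) hx hy

lemma wZeta_neg (L : PeriodPair) (z : ℂ) : wZeta L.ω₁ L.ω₂ (-z) = - wZeta L.ω₁ L.ω₂ z := by
  have h1 : deriv (wSigma L.ω₁ L.ω₂) (-z) = deriv (wSigma L.ω₁ L.ω₂) z := by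
    have := deriv_comp_neg (wSigma L.ω₁ L.ω₂) z
    simp only [wSigma_neg, deriv.fun_neg] at this
    exact (neg_injective this).symm
  rw [wZeta, wZeta, h1, wSigma_neg, div_neg]

lemma wZeta_add (L : PeriodPair) {ω z : ℂ} (hω : ω ∈ L.lattice) (h2 : ω / 2 ∉ L.lattice)
    (hz : z ∉ L.lattice) : wZeta L.ω₁ L.ω₂ (z + ω) - wZeta L.ω₁ L.ω₂ z = 2 * wZeta L.ω₁ L.ω₂ (ω / 2) := by
  have h3 : -(ω / 2) ∉ L.lattice := by rwa [neg_mem_iff]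
  have := eqOn_const (isOpen_compl L) (preconn L)
    (f := fun z => wZeta L.ω₁ L.ω₂ (z + ω) - wZeta L.ω₁ L.ω₂ z) (fun y hy => by
      have hy' : y + ω ∉ L.lattice := by rwa [add_mem_cancel_right hω]
      have := ((hasDerivAt_wZeta L hy').comp_add_const y ω).sub (hasDerivAt_wZeta L hy)
      refine this.congr_deriv ?_
      rw [L.weierstrassP_add_coe y ⟨ω, hω⟩]; ring) hz h3
  rw [this, wZeta_neg, show -(ω / 2) + ω = ω / 2 by ring]; ring

lemma hasDerivAt_wSigma (L : PeriodPair) {z : ℂ} (hz : z ∉ L.lattice) :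
    HasDerivAt (wSigma L.ω₁ L.ω₂) (wZeta L.ω₁ L.ω₂ z * wSigma L.ω₁ L.ω₂ z) z := by
  rw [wZeta, div_mul_cancel₀ _ (wSigma_ne L hz)]
  exact (differentiable_wSigma L z).hasDerivAt

lemma wSigma_add_aux (L : PeriodPair) {ω z : ℂ} (hω : ω ∈ L.lattice) (h2 : ω / 2 ∉ L.lattice)
    (hz : z ∉ L.lattice) : wSigma L.ω₁ L.ω₂ (z + ω) =
      - Complex.exp (2 * wZeta L.ω₁ L.ω₂ (ω / 2) * (z + ω / 2)) * wSigma L.ω₁ L.ω₂ z := by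
  set lam := 2 * wZeta L.ω₁ L.ω₂ (ω / 2) with hlam
  have h3 : -(ω / 2) ∉ L.lattice := by rwa [neg_mem_iff]
  have := eqOn_const (isOpen_compl L) (preconn L)
    (f := fun z => wSigma L.ω₁ L.ω₂ (z + ω) / wSigma L.ω₁ L.ω₂ z * Complex.exp (- (lam * (z + ω / 2))))
    (fun y hy => by
      have hy' : y + ω ∉ L.lattice := by rwa [add_mem_cancel_right hω]
      have d1 := ((hasDerivAt_wSigma L hy').comp_add_const y ω).div (hasDerivAt_wSigma L hy) (wSigma_ne L hy)
      have d2 : HasDerivAt (fun z => Complex.exp (- (lam * (z + ω / 2))))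
        (Complex.exp (- (lam * (y + ω / 2))) * (- (lam * 1))) y :=
        ((((hasDerivAt_id y).add_const (ω / 2)).const_mul lam).neg).cexp
      have e := wZeta_add L hω h2 hy
      rw [← hlam] at e
      refine (d1.mul d2).congr_deriv ?_
      rw [← e]
      have := wSigma_ne L hy
      simp only [Pi.div_apply]
      field_simp
      ring_nf) hz h3
  have hs := wSigma_ne L h2
  rw [show -(ω / 2) + ω = ω / 2 by ring, wSigma_neg, div_neg, div_self hs,
    show -(lam * (-(ω / 2) + ω / 2)) = 0 by ring, Complex.exp_zero, Complex.exp_neg] at this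
  have hz' := wSigma_ne L hz
  have hexp := Complex.exp_ne_zero (lam * (z + ω / 2))
  field_simp at this
  rw [this]; ring

lemma wSigma_add (L : PeriodPair) {ω : ℂ} (hω : ω ∈ L.lattice) (h2 : ω / 2 ∉ L.lattice)
    (z : ℂ) : wSigma L.ω₁ L.ω₂ (z + ω) =
      - Complex.exp (2 * wZeta L.ω₁ L.ω₂ (ω / 2) * (z + ω / 2)) * wSigma L.ω₁ L.ω₂ z := by
  have hc : (L.lattice : Set ℂ).Countable := by
    have : Countable L.lattice := L.latticeEquivProd.toEquiv.injective.countable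
    exact Set.to_countable _
  have hd : Dense ((L.lattice : Set ℂ)ᶜ) := hc.dense_compl ℝ
  have hcont := (differentiable_wSigma L).continuous
  have := Continuous.ext_on hd (f := fun z => wSigma L.ω₁ L.ω₂ (z + ω))
    (g := fun z => - Complex.exp (2 * wZeta L.ω₁ L.ω₂ (ω / 2) * (z + ω / 2)) * wSigma L.ω₁ L.ω₂ z)
    (by fun_prop) (by fun_prop) (fun y hy => wSigma_add_aux L hω h2 hy)
  exact congrFun this z

end SigmaPart2


section SigmaPart3

open Filter Topology Complex

lemma ind (L : PeriodPair) {a b : ℝ} (h : (a : ℂ) * L.ω₁ + b * L.ω₂ = 0) : a = 0 ∧ b = 0 := by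
  have := LinearIndependent.pair_iff.1 L.indep a b
  simp only [real_smul] at this
  exact this h

lemma ind' (L : PeriodPair) {a b c d : ℝ}
    (h : (a : ℂ) * L.ω₁ + b * L.ω₂ = c * L.ω₁ + d * L.ω₂) : a = c ∧ b = d := by
  have := ind L (a := a - c) (b := b - d) (by push_cast; linear_combination h)
  constructor <;> linarith [this.1, this.2]

def Qs (L : PeriodPair) : Set ℂ :=
  (fun p : ℝ × ℝ => (p.1 : ℂ) * L.ω₁ + p.2 * L.ω₂) '' (Set.Icc (-(1/2)) (1/2) ×ˢ Set.Icc (-(1/2)) (1/2))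

lemma Qs_compact (L : PeriodPair) : IsCompact (Qs L) :=
  (isCompact_Icc.prod isCompact_Icc).image (by fun_prop)

lemma Qs_mem (L : PeriodPair) {t y : ℝ} (ht : t ∈ Set.Icc (-(1/2) : ℝ) (1/2))
    (hy : y ∈ Set.Icc (-(1/2) : ℝ) (1/2)) : (t : ℂ) * L.ω₁ + y * L.ω₂ ∈ Qs L :=
  ⟨(t, y), ⟨ht, hy⟩, rfl⟩

lemma slit (L : PeriodPair) {z : ℂ} (hz : z ∈ Qs L) (p : NZ) : 1 - z / lw L p ∈ slitPlane := by
  obtain ⟨⟨t, y⟩, ⟨ht, hy⟩, rfl⟩ := hz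
  by_contra hcon
  rw [mem_slitPlane_iff, not_or] at hcon
  simp only [not_lt, not_not] at hcon
  obtain ⟨h1, h2⟩ := hcon
  set u := ((t : ℂ) * L.ω₁ + y * L.ω₂) / lw L p with hu
  simp only [sub_re, one_re, sub_im, one_im] at h1 h2
  have hr : u = (u.re : ℂ) := Complex.ext (by simp) (by simp; linarith)
  have hr1 : 1 ≤ u.re := by linarith
  rw [hr, eq_comm, div_eq_iff (lw_ne L p)] at hu
  have hu2 := ind' L (a := t) (b := y) (c := u.re * p.1.1) (d := u.re * p.1.2) (by
    rw [hu, lw]; push_cast; ring)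
  have key : ∀ m : ℤ, -(1/2) ≤ u.re * m → u.re * m ≤ 1/2 → m = 0 := by
    intro m hm1 hm2
    by_contra hm
    rcases lt_or_gt_of_ne hm with h | h
    · have : (m : ℝ) ≤ -1 := by exact_mod_cast Int.le_sub_one_of_lt h
      nlinarith
    · have : (1 : ℝ) ≤ m := by exact_mod_cast h
      nlinarith
  simp only [Set.mem_Icc] at ht hy
  apply p.2
  refine Prod.ext (key _ ?_ ?_) (key _ ?_ ?_)
  · rw [← hu2.1]; exact ht.1
  · rw [← hu2.1]; exact ht.2
  · rw [← hu2.2]; exact hy.1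
  · rw [← hu2.2]; exact hy.2

noncomputable def Lg (L : PeriodPair) (z : ℂ) : ℂ := ∑' p : NZ, gl (z / lw L p)

lemma Lg_hasSum (L : PeriodPair) :
    HasSumUniformlyOn (fun (p : NZ) z => gl (z / lw L p)) (Lg L) (Qs L) := by
  obtain ⟨R, hR⟩ := (Qs_compact L).isBounded.exists_norm_le
  refine HasSumUniformlyOn.of_norm_le_summable_eventually ((summable_lw L).mul_left (R ^ 3)) ?_
  filter_upwards [eventually_half L R] with p hp z hz
  exact (gl_bound (hp z (hR z hz))).trans (bound_aux L R p z (hR z hz))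

lemma Lg_cont (L : PeriodPair) : ContinuousOn (Lg L) (Qs L) := by
  have h := hasSumUniformlyOn_iff_tendstoUniformlyOn.1 (Lg_hasSum L)
  refine h.continuousOn (Eventually.frequently (.of_forall fun S => ?_))
  refine continuousOn_finsetSum S fun p _ => ?_
  unfold gl
  have h1 : ContinuousOn (fun z => 1 - z / lw L p) (Qs L) := by fun_prop
  exact ((h1.clog fun z hz => slit L hz p).add (by fun_prop)).add (by fun_prop)

lemma Lg_neg (L : PeriodPair) (z : ℂ) : Lg L (-z) = Lg L z := by
  let e : NZ ≃ NZ := (Equiv.neg (ℤ × ℤ)).subtypeEquiv (by simp)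
  rw [Lg, Lg, ← e.tsum_eq]
  refine tsum_congr fun p => ?_
  have : lw L (e p) = - lw L p := by
    simp [lw, e]; ring
  rw [this, neg_div_neg_eq]

lemma exp_Lg (L : PeriodPair) {z : ℂ} (hz : z ∈ Qs L) : Complex.exp (Lg L z) = Pr L z := by
  have h := ((Lg_hasSum L).hasSum hz).cexp
  rw [← h.tprod_eq]
  refine tprod_congr fun p => ?_
  simp only [Function.comp]
  rw [Ef_eq]
  intro h1
  have := slit L hz p
  rw [h1] at this
  simp at this

lemma const_of_exp {D : ℝ → ℂ} (hD : ContinuousOn D (Set.Icc 0 (1/2)))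
    (h1 : ∀ y ∈ Set.Icc (0:ℝ) (1/2), Complex.exp (D y) = 1) (h0 : D 0 = 0) : D (1/2) = 0 := by
  have hm : (1/2 : ℝ) ∈ Set.Icc (0:ℝ) (1/2) := by norm_num
  have key : ∀ y ∈ Set.Icc (0:ℝ) (1/2), ∃ n : ℤ, D y = n * (2 * Real.pi * I) :=
    fun y hy => Complex.exp_eq_one_iff.1 (h1 y hy)
  have him : ContinuousOn (fun y => (D y).im) (Set.Icc 0 (1/2)) :=
    Complex.continuous_im.comp_continuousOn hD
  have hn : ∀ y ∈ Set.Icc (0:ℝ) (1/2), ∀ k : ℤ, (D y).im ≠ (2 * k + 1) * Real.pi := by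
    intro y hy k hk
    obtain ⟨n, e⟩ := key y hy
    rw [e] at hk
    simp at hk
    have : (2 * n : ℝ) = 2 * k + 1 := by
      have := Real.pi_ne_zero
      apply mul_right_cancel₀ this
      linarith
    have h2 : (2 * n : ℤ) = 2 * k + 1 := by exact_mod_cast this
    omega
  obtain ⟨n, e⟩ := key _ hm
  have e2 : (D (1/2)).im = n * (2 * Real.pi) := by rw [e]; simp
  rcases lt_trichotomy n 0 with h | h | h
  · exfalso
    have : (n : ℝ) ≤ -1 := by exact_mod_cast Int.le_sub_one_of_lt h
    have hp := Real.pi_pos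
    obtain ⟨y, hy, hy2⟩ := intermediate_value_Icc' (by norm_num) him
      (show -Real.pi ∈ Set.Icc ((D (1/2)).im) ((D 0).im) by
        rw [h0, e2]; constructor
        · nlinarith
        · simp; linarith)
    exact hn y hy (-1) (by have hy3 : (D y).im = -Real.pi := hy2
                           rw [hy3]; push_cast; ring)
  · rw [e, h]; simp
  · exfalso
    have : (1 : ℝ) ≤ n := by exact_mod_cast h
    have hp := Real.pi_pos
    obtain ⟨y, hy, hy2⟩ := intermediate_value_Icc (by norm_num) him
      (show Real.pi ∈ Set.Icc ((D 0).im) ((D (1/2)).im) by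
        rw [h0, e2]; constructor
        · simp; linarith
        · nlinarith)
    exact hn y hy 0 (by have hy3 : (D y).im = Real.pi := hy2
                        rw [hy3]; push_cast; ring)

lemma leg (L : PeriodPair) {ω ω' : ℂ} (hω : ω ∈ L.lattice) (h2 : ω / 2 ∉ L.lattice)
    (hi : ∀ a b : ℝ, (a : ℂ) * ω + b * ω' = 0 → a = 0 ∧ b = 0)
    (hQ : ∀ a ∈ Set.Icc (-(1/2) : ℝ) (1/2), ∀ b ∈ Set.Icc (-(1/2) : ℝ) (1/2), (a : ℂ) * ω + b * ω' ∈ Qs L) :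
    Lg L (ω / 2 + ω' / 2) - Lg L (-(ω / 2) + ω' / 2) = 2 * wZeta L.ω₁ L.ω₂ (ω / 2) * (ω' / 2) +
      Complex.log ((ω / 2 - ω' / 2) / (ω / 2 + ω' / 2)) := by
  set lam := 2 * wZeta L.ω₁ L.ω₂ (ω / 2) with hlam
  have hsub : ∀ y ∈ Set.Icc (0:ℝ) (1/2), y ∈ Set.Icc (-(1/2) : ℝ) (1/2) := fun y hy => ⟨by linarith [hy.1], hy.2⟩
  have hQ1 : ∀ y ∈ Set.Icc (0:ℝ) (1/2), ω / 2 + y * ω' ∈ Qs L := fun y hy => by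
    have := hQ (1/2) (by norm_num) y (hsub y hy)
    convert this using 2; push_cast; ring
  have hQ2 : ∀ y ∈ Set.Icc (0:ℝ) (1/2), -(ω / 2) + y * ω' ∈ Qs L := fun y hy => by
    have := hQ (-(1/2)) (by norm_num) y (hsub y hy)
    convert this using 2; push_cast; ring
  have n1 : ∀ y : ℝ, ω / 2 + y * ω' ≠ 0 := fun y h => by
    have := (hi (1/2) y (by push_cast; linear_combination h)).1
    norm_num at this
  have n2 : ∀ y : ℝ, ω / 2 - y * ω' ≠ 0 := fun y h => by
    have := n1 (-y)
    apply this; push_cast; linear_combination h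
  have hsl : ∀ y : ℝ, (ω / 2 - y * ω') / (ω / 2 + y * ω') ∈ slitPlane := by
    intro y
    by_contra hcon
    rw [mem_slitPlane_iff, not_or] at hcon
    simp only [not_lt, not_not] at hcon
    obtain ⟨g1, g2⟩ := hcon
    set u := (ω / 2 - y * ω') / (ω / 2 + y * ω') with hu
    have hr : u = (u.re : ℂ) := Complex.ext (by simp) (by simp; linarith)
    rw [hr, eq_comm, div_eq_iff (n1 y)] at hu
    have := (hi ((1 - u.re) / 2) (-y * (1 + u.re)) (by push_cast; linear_combination hu)).1
    linarith
  have := const_of_exp (D := fun y : ℝ => Lg L (ω / 2 + y * ω') - Lg L (-(ω / 2) + y * ω') - lam * (y * ω') -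
      Complex.log ((ω / 2 - y * ω') / (ω / 2 + y * ω'))) ?_ ?_ ?_
  · rw [show (((1/2 : ℝ)) : ℂ) * ω' = ω' / 2 by push_cast; ring] at this
    linear_combination this
  · have c1 : ContinuousOn (fun y : ℝ => Lg L (ω / 2 + y * ω')) (Set.Icc 0 (1/2)) :=
      (Lg_cont L).comp (by fun_prop) hQ1
    have c2 : ContinuousOn (fun y : ℝ => Lg L (-(ω / 2) + y * ω')) (Set.Icc 0 (1/2)) :=
      (Lg_cont L).comp (by fun_prop) hQ2
    have c3 : ContinuousOn (fun y : ℝ => (ω / 2 - y * ω') / (ω / 2 + y * ω')) (Set.Icc 0 (1/2)) :=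
      ContinuousOn.div (by fun_prop) (by fun_prop) fun y _ => n1 y
    exact ((c1.sub c2).sub (by fun_prop)).sub (c3.clog fun y _ => hsl y)
  · intro y hy
    rw [Complex.exp_sub, Complex.exp_sub, Complex.exp_sub, exp_Lg L (hQ1 y hy), exp_Lg L (hQ2 y hy),
      Complex.exp_log (div_ne_zero (n2 y) (n1 y))]
    have e := wSigma_add L hω h2 (-(ω / 2) + y * ω')
    rw [wSigma_eq, wSigma_eq, ← hlam, show -(ω / 2) + y * ω' + ω = ω / 2 + y * ω' by ring,
      show -(ω / 2) + y * ω' + ω / 2 = y * ω' by ring] at e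
    have k1 := n1 y
    have k2 := n2 y
    have k3 := Complex.exp_ne_zero (lam * (y * ω'))
    have k4 : Pr L (-(ω / 2) + y * ω') ≠ 0 := by
      rw [← exp_Lg L (hQ2 y hy)]; exact Complex.exp_ne_zero _
    rw [div_div, div_div, div_eq_one_iff_eq (mul_ne_zero k4 (mul_ne_zero k3 (div_ne_zero k2 k1))),
      mul_div_assoc', mul_div_assoc', eq_div_iff k1]
    linear_combination e
  · simp only [ofReal_zero, zero_mul, add_zero, sub_zero, mul_zero]
    rw [Lg_neg, div_self (by simpa using n1 0)]
    simp

lemma legendre (L : PeriodPair) (h1 : L.ω₁.im = 0) (h1' : 0 < L.ω₁.re) (h2 : 0 < L.ω₂.im) :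
    2 * wZeta L.ω₁ L.ω₂ (L.ω₁ / 2) * L.ω₂ - 2 * wZeta L.ω₁ L.ω₂ (L.ω₂ / 2) * L.ω₁ = 2 * Real.pi * I := by
  have e1 := leg L (ω' := L.ω₂) L.ω₁_mem_lattice L.ω₁_div_two_notMem_lattice (fun a b h => ind L h)
    (fun a ha b hb => Qs_mem L ha hb)
  have e2 := leg L (ω' := L.ω₁) L.ω₂_mem_lattice L.ω₂_div_two_notMem_lattice
    (fun a b h => (ind L (a := b) (b := a) (by linear_combination h)).symm)
    (fun a ha b hb => by rw [add_comm]; exact Qs_mem L hb ha)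
  rw [show L.ω₂ / 2 + L.ω₁ / 2 = L.ω₁ / 2 + L.ω₂ / 2 by ring,
    show -(L.ω₂ / 2) + L.ω₁ / 2 = -(-(L.ω₁ / 2) + L.ω₂ / 2) by ring, Lg_neg,
    show (L.ω₂ / 2 - L.ω₁ / 2) / (L.ω₁ / 2 + L.ω₂ / 2) = -((L.ω₁ / 2 - L.ω₂ / 2) / (L.ω₁ / 2 + L.ω₂ / 2)) by
      rw [← neg_div, neg_sub]] at e2
  set q := (L.ω₁ / 2 - L.ω₂ / 2) / (L.ω₁ / 2 + L.ω₂ / 2) with hq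
  have hqi : q.im < 0 := by
    have hne : L.ω₁ / 2 + L.ω₂ / 2 ≠ 0 := by
      intro h
      have := (ind L (a := 1/2) (b := 1/2) (by push_cast; linear_combination h)).1
      norm_num at this
    have hN : 0 < normSq (L.ω₁ / 2 + L.ω₂ / 2) := normSq_pos.2 hne
    rw [hq, div_im, ← sub_div]
    apply div_neg_of_neg_of_pos _ hN
    simp [h1]
    nlinarith
  have hlog : Complex.log (-q) = Complex.log q + Real.pi * I := by
    rw [Complex.log, Complex.log, norm_neg, arg_neg_eq_arg_add_pi_of_im_neg hqi]
    push_cast; ring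
  rw [hlog] at e2
  linear_combination 2 * e2 - 2 * e1

lemma sigmaStar_ne (L : PeriodPair) {z : ℂ} (hz : z ∉ L.lattice) : sigmaStar L.ω₁ L.ω₂ z ≠ 0 :=
  mul_ne_zero (Complex.exp_ne_zero _) (wSigma_ne L hz)

lemma sigmaStar_zero (L : PeriodPair) : sigmaStar L.ω₁ L.ω₂ 0 = 0 := by
  simp [sigmaStar, wSigma_zero]

lemma differentiable_sigmaStar (L : PeriodPair) : Differentiable ℂ (sigmaStar L.ω₁ L.ω₂) := by
  have := differentiable_wSigma L
  have e : sigmaStar L.ω₁ L.ω₂ = fun z => Complex.exp (bconst L.ω₁ L.ω₂ * z ^ 2) * wSigma L.ω₁ L.ω₂ z := rfl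
  rw [e]
  fun_prop

lemma deriv_sigmaStar_zero (L : PeriodPair) : deriv (sigmaStar L.ω₁ L.ω₂) 0 = 1 := by
  have h := (differentiable_wSigma L 0).hasDerivAt
  have h2 : DifferentiableAt ℂ (fun z => Complex.exp (bconst L.ω₁ L.ω₂ * z ^ 2)) 0 := by fun_prop
  have h3 := (h2.hasDerivAt.mul h).deriv
  rw [wSigma_zero, deriv_wSigma_zero] at h3
  have e : sigmaStar L.ω₁ L.ω₂ = (fun z => Complex.exp (bconst L.ω₁ L.ω₂ * z ^ 2)) * wSigma L.ω₁ L.ω₂ := rfl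
  rw [e, h3]; simp

lemma sigmaStar_add₁ (L : PeriodPair) (h1 : L.ω₁.im = 0) (h1' : 0 < L.ω₁.re) (z : ℂ) :
    sigmaStar L.ω₁ L.ω₂ (z + L.ω₁) =
      - Complex.exp (2 * (starRingEnd ℂ) L.ω₁ * (z + L.ω₁ / 2)) * sigmaStar L.ω₁ L.ω₂ z := by
  have hne : L.ω₁ ≠ 0 := by rintro h; rw [h] at h1'; simp at h1'
  rw [Complex.conj_eq_iff_im.2 h1, sigmaStar, sigmaStar, wSigma_add L L.ω₁_mem_lattice L.ω₁_div_two_notMem_lattice]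
  have : Complex.exp (2 * wZeta L.ω₁ L.ω₂ (L.ω₁ / 2) * (z + L.ω₁ / 2)) *
      Complex.exp (bconst L.ω₁ L.ω₂ * (z + L.ω₁) ^ 2) =
      Complex.exp (2 * L.ω₁ * (z + L.ω₁ / 2)) * Complex.exp (bconst L.ω₁ L.ω₂ * z ^ 2) := by
    rw [← Complex.exp_add, ← Complex.exp_add]
    congr 1
    rw [bconst, lambda1]
    field_simp
    ring
  linear_combination (-wSigma L.ω₁ L.ω₂ z) * this

lemma sigmaStar_add₂ (L : PeriodPair) (h1 : L.ω₁.im = 0) (h1' : 0 < L.ω₁.re) (h2 : 0 < L.ω₂.im)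
    (harea : L.ω₁.re * L.ω₂.im = Real.pi / 2) (z : ℂ) :
    sigmaStar L.ω₁ L.ω₂ (z + L.ω₂) =
      - Complex.exp (2 * (starRingEnd ℂ) L.ω₂ * (z + L.ω₂ / 2)) * sigmaStar L.ω₁ L.ω₂ z := by
  have hne : L.ω₁ ≠ 0 := by rintro h; rw [h] at h1'; simp at h1'
  have hl := legendre L h1 h1' h2
  rw [sigmaStar, sigmaStar, wSigma_add L L.ω₂_mem_lattice L.ω₂_div_two_notMem_lattice]
  have hre : L.ω₁ = (L.ω₁.re : ℂ) := Complex.ext (by simp) (by simp [h1])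
  have hconj : (starRingEnd ℂ) L.ω₂ * L.ω₁ = L.ω₂ * L.ω₁ - Real.pi * I := by
    have e : (L.ω₂ - (starRingEnd ℂ) L.ω₂) = 2 * L.ω₂.im * I := by
      rw [Complex.sub_conj]; push_cast; ring
    have e3 : (L.ω₁ * L.ω₂.im : ℂ) = Real.pi / 2 := by
      rw [hre]; exact_mod_cast harea
    linear_combination (-L.ω₁) * e - 2 * I * e3
  have : Complex.exp (2 * wZeta L.ω₁ L.ω₂ (L.ω₂ / 2) * (z + L.ω₂ / 2)) *
      Complex.exp (bconst L.ω₁ L.ω₂ * (z + L.ω₂) ^ 2) =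
      Complex.exp (2 * (starRingEnd ℂ) L.ω₂ * (z + L.ω₂ / 2)) * Complex.exp (bconst L.ω₁ L.ω₂ * z ^ 2) := by
    rw [← Complex.exp_add, ← Complex.exp_add]
    congr 1
    rw [bconst, lambda1]
    apply mul_right_cancel₀ hne
    field_simp
    linear_combination (z + L.ω₂ / 2) * (-hl - 2 * hconj)
  linear_combination (-wSigma L.ω₁ L.ω₂ z) * this

end SigmaPart3


section AnaPart

open Filter Topology Complex

structure SS (L : PeriodPair) (s : ℂ → ℂ) : Prop where
  diff : Differentiable ℂ s
  zero : s 0 = 0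
  ne : ∀ z, z ∉ L.lattice → s z ≠ 0
  d0 : deriv s 0 = 1
  a1 : ∀ z, s (z + L.ω₁) = - Complex.exp (2 * (starRingEnd ℂ) L.ω₁ * (z + L.ω₁ / 2)) * s z
  a2 : ∀ z, s (z + L.ω₂) = - Complex.exp (2 * (starRingEnd ℂ) L.ω₂ * (z + L.ω₂ / 2)) * s z

noncomputable def psi (s : ℂ → ℂ) (z : ℂ) : ℝ := ‖s z‖ * Real.exp (-‖z‖ ^ 2)

lemma nsq_add (z w : ℂ) : ‖z + w‖ ^ 2 = ‖z‖ ^ 2 + 2 * ((starRingEnd ℂ) w * z).re + ‖w‖ ^ 2 := by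
  rw [← normSq_eq_norm_sq, ← normSq_eq_norm_sq, ← normSq_eq_norm_sq]
  simp [normSq_apply]; ring

lemma psi_step {s : ℂ → ℂ} {ω : ℂ}
    (h : ∀ z, s (z + ω) = - Complex.exp (2 * (starRingEnd ℂ) ω * (z + ω / 2)) * s z) :
    Function.Periodic (psi s) ω := by
  intro z
  rw [psi, psi, h, norm_mul, norm_neg, Complex.norm_exp, nsq_add]
  have : (2 * (starRingEnd ℂ) ω * (z + ω / 2)).re = 2 * ((starRingEnd ℂ) ω * z).re + ‖ω‖ ^ 2 := by
    rw [← normSq_eq_norm_sq]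
    simp [normSq_apply]; ring
  rw [this, mul_right_comm, ← Real.exp_add, mul_comm]
  congr 2
  ring

lemma SS.per {L : PeriodPair} {s : ℂ → ℂ} (H : SS L s) {ω : ℂ} (hω : ω ∈ L.lattice) :
    Function.Periodic (psi s) ω := by
  obtain ⟨m, n, rfl⟩ := PeriodPair.mem_lattice.1 hω
  exact ((psi_step H.a1).int_mul m).add_period ((psi_step H.a2).int_mul n)

lemma psi_eq_zero {s : ℂ → ℂ} {z : ℂ} : psi s z = 0 ↔ s z = 0 := by
  simp [psi, (Real.exp_pos _).ne']

lemma psi_nonneg (s : ℂ → ℂ) (z : ℂ) : 0 ≤ psi s z := by unfold psi; positivity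

lemma SS.eq_zero {L : PeriodPair} {s : ℂ → ℂ} (H : SS L s) {z : ℂ} : s z = 0 ↔ z ∈ L.lattice := by
  constructor
  · intro h; by_contra h2; exact H.ne z h2 h
  · intro h
    have := H.per h 0
    rw [zero_add] at this
    rw [← psi_eq_zero, this, psi_eq_zero, H.zero]

lemma SS.deriv_ne {L : PeriodPair} {s : ℂ → ℂ} (H : SS L s) {u : ℂ} (hu : u ∈ L.lattice) :
    deriv s u ≠ 0 := by
  have t1 := (hasDerivAt_iff_tendsto_slope_zero.1 (H.diff u).hasDerivAt).norm
  have t0 := (hasDerivAt_iff_tendsto_slope_zero.1 (H.diff 0).hasDerivAt).norm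
  have e : ∀ h : ℂ, ‖h⁻¹ • (s (u + h) - s u)‖ =
      ‖h⁻¹ • (s (0 + h) - s 0)‖ * Real.exp (‖h + u‖ ^ 2 - ‖h‖ ^ 2) := by
    intro h
    have := H.per hu h
    rw [psi, psi, Real.exp_neg, Real.exp_neg] at this
    rw [H.eq_zero.2 hu, H.zero, sub_zero, sub_zero, zero_add, norm_smul, norm_smul, mul_assoc,
      Real.exp_sub, add_comm u h]
    congr 1
    field_simp at this ⊢
    linarith
  have t2 : Tendsto (fun h : ℂ => Real.exp (‖h + u‖ ^ 2 - ‖h‖ ^ 2)) (𝓝[≠] 0) (𝓝 (Real.exp (‖0 + u‖ ^ 2 - ‖(0:ℂ)‖ ^ 2))) := by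
    apply Tendsto.mono_left _ nhdsWithin_le_nhds
    exact Continuous.tendsto (by fun_prop) 0
  have t3 := t0.mul t2
  simp only [e] at t1
  have := tendsto_nhds_unique t1 t3
  rw [H.d0] at this
  intro h0
  rw [h0, norm_zero, norm_one, one_mul] at this
  exact (Real.exp_pos _).ne this

lemma SS.cont {L : PeriodPair} {s : ℂ → ℂ} (H : SS L s) : Continuous (psi s) := by
  have := H.diff.continuous
  unfold psi
  fun_prop

lemma exists_coord {a b : ℂ} (h1 : a.im = 0) (h1' : 0 < a.re) (h2 : 0 < b.im) (z : ℂ) :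
    ∃ t y : ℝ, z = t * a + y * b := by
  refine ⟨(z.re - z.im / b.im * b.re) / a.re, z.im / b.im, ?_⟩
  apply Complex.ext
  · simp; field_simp; ring
  · simp [h1]; field_simp

lemma bdd_of_per {a b : ℂ} (h1 : a.im = 0) (h1' : 0 < a.re) (h2 : 0 < b.im) {G : ℂ → ℝ}
    (hG : Continuous G) (ha : Function.Periodic G a) (hb : Function.Periodic G b) :
    ∃ C, ∀ z, G z ≤ C := by
  have hK : IsCompact ((fun p : ℝ × ℝ => (p.1 : ℂ) * a + p.2 * b) '' (Set.Icc 0 1 ×ˢ Set.Icc 0 1)) :=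
    (isCompact_Icc.prod isCompact_Icc).image (by fun_prop)
  obtain ⟨C, hC⟩ := hK.bddAbove_image hG.continuousOn
  refine ⟨C, fun z => ?_⟩
  obtain ⟨t, y, rfl⟩ := exists_coord h1 h1' h2 z
  have := ((ha.int_mul ⌊t⌋).add_period (hb.int_mul ⌊y⌋)) (Int.fract t * a + Int.fract y * b)
  rw [show ((Int.fract t : ℝ) * a + (Int.fract y : ℝ) * b + (⌊t⌋ * a + ⌊y⌋ * b) : ℂ) = t * a + y * b by
    rw [Int.fract, Int.fract]; push_cast; ring] at this
  rw [this]
  refine hC ⟨_, ⟨(Int.fract t, Int.fract y), ⟨?_, ?_⟩, rfl⟩, rfl⟩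
  · exact ⟨Int.fract_nonneg _, (Int.fract_lt_one _).le⟩
  · exact ⟨Int.fract_nonneg _, (Int.fract_lt_one _).le⟩

lemma dslope_diff {f : ℂ → ℂ} (hf : Differentiable ℂ f) (u : ℂ) : Differentiable ℂ (dslope f u) := by
  have := (Complex.differentiableOn_dslope (s := Set.univ) (c := u) (f := f) univ_mem).2 hf.differentiableOn
  exact differentiableOn_univ.1 this

lemma dslope_eq {f : ℂ → ℂ} (u z : ℂ) (h0 : f u = 0) : f z = (z - u) * dslope f u z := by
  have := sub_smul_dslope f u z
  rw [h0, smul_eq_mul, sub_zero] at this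
  exact this.symm

lemma exists_quot {f g : ℂ → ℂ} (hf : Differentiable ℂ f) (hg : Differentiable ℂ g)
    (h : ∀ z, g z = 0 → f z = 0 ∧ deriv g z ≠ 0) :
    ∃ k : ℂ → ℂ, Differentiable ℂ k ∧ ∀ z, f z = k z * g z := by
  classical
  refine ⟨fun z => if g z = 0 then deriv f z / deriv g z else f z / g z, fun u => ?_, fun z => ?_⟩
  · by_cases hu : g u = 0
    · obtain ⟨h1, h2⟩ := h u hu
      have df := dslope_diff hf u
      have dg := dslope_diff hg u
      have n0 : dslope g u u ≠ 0 := by rwa [dslope_same]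
      have ev := dg.continuous.continuousAt.eventually_ne n0
      refine ((df u).div (dg u) n0).congr_of_eventuallyEq ?_
      filter_upwards [ev] with z hz
      simp only [Pi.div_apply]
      by_cases hzu : z = u
      · subst hzu; rw [if_pos hu, dslope_same, dslope_same]
      · have e1 := dslope_eq u z h1
        have e2 := dslope_eq u z hu
        have h3 : z - u ≠ 0 := sub_ne_zero.2 hzu
        have h4 : g z ≠ 0 := by rw [e2]; exact mul_ne_zero h3 hz
        rw [if_neg h4, e1, e2]
        exact mul_div_mul_left _ _ h3
    · have ev := hg.continuous.continuousAt.eventually_ne hu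
      refine ((hf u).div (hg u) hu).congr_of_eventuallyEq ?_
      filter_upwards [ev] with z hz
      simp [hz]
  · dsimp only
    split_ifs with hz
    · rw [(h z hz).1, hz, mul_zero]
    · rw [div_mul_cancel₀ _ hz]

noncomputable def gw (L : PeriodPair) (n : ℕ) (j : Fin n × Fin n) : ℂ :=
  ((j.1 : ℕ) * L.ω₁ + (j.2 : ℕ) * L.ω₂) / n

lemma grid_mem (L : PeriodPair) {n : ℕ} (hn : 0 < n) (z : ℂ) :
    n * z ∈ L.lattice ↔ ∃ j, z - gw L n j ∈ L.lattice := by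
  have hn0 : (n : ℂ) ≠ 0 := by exact_mod_cast hn.ne'
  constructor
  · intro h
    obtain ⟨a, b, e⟩ := PeriodPair.mem_lattice.1 h
    have hnz : (0 : ℤ) < n := by exact_mod_cast hn
    have key : ∀ a : ℤ, ∃ p : Fin n, ∃ c : ℤ, a = c * n + (p : ℕ) := by
      intro a
      have g1 := Int.emod_nonneg a hnz.ne'
      have g2 := Int.emod_lt_of_pos a hnz
      refine ⟨⟨(a % n).toNat, by omega⟩, a / n, ?_⟩
      simp only [Int.toNat_of_nonneg g1]
      have := Int.emod_add_mul_ediv a n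
      linarith
    obtain ⟨p, c, hp⟩ := key a
    obtain ⟨q, d, hq⟩ := key b
    refine ⟨(p, q), PeriodPair.mem_lattice.2 ⟨c, d, ?_⟩⟩
    have hz : z = (a * L.ω₁ + b * L.ω₂) / n := by rw [eq_div_iff hn0, e]; ring
    rw [hz, hp, hq, gw]
    push_cast
    field_simp
    ring
  · rintro ⟨j, hj⟩
    obtain ⟨a, b, e⟩ := PeriodPair.mem_lattice.1 hj
    refine PeriodPair.mem_lattice.2 ⟨n * a + (j.1 : ℕ), n * b + (j.2 : ℕ), ?_⟩
    have hz : z = a * L.ω₁ + b * L.ω₂ + gw L n j := by linear_combination -e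
    rw [hz, gw]
    push_cast
    field_simp
    ring

end AnaPart


section AnaPart2

open Filter Topology Complex

noncomputable def Vf (s : ℂ → ℂ) (z : ℂ) : ℝ := Real.log ‖s z‖ - ‖z‖ ^ 2

lemma log_psi {s : ℂ → ℂ} {z : ℂ} (h : s z ≠ 0) : Real.log (psi s z) = Vf s z := by
  rw [psi, Real.log_mul (norm_ne_zero_iff.2 h) (Real.exp_pos _).ne', Real.log_exp, Vf]; ring

lemma norm_eq_psi (s : ℂ → ℂ) (z : ℂ) : ‖s z‖ = psi s z * Real.exp (‖z‖ ^ 2) := by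
  rw [psi, mul_assoc, ← Real.exp_add]; simp

lemma SS.grid {L : PeriodPair} {s : ℂ → ℂ} (H : SS L s) (h1 : L.ω₁.im = 0) (h1' : 0 < L.ω₁.re)
    (h2 : 0 < L.ω₂.im) {n : ℕ} (hn : 0 < n) :
    ∃ c : ℝ, ∀ z : ℂ, n * z ∉ L.lattice → ∑ j, Real.log (psi s (z - gw L n j)) = Real.log (psi s (n * z)) + c := by
  have hn0 : (n : ℂ) ≠ 0 := by exact_mod_cast hn.ne'
  obtain ⟨h, hd, hfg⟩ := exists_quot (f := fun z => ∏ j, s (z - gw L n j)) (g := fun z => s (n * z))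
    (by
      refine Differentiable.fun_finsetProd fun j _ => ?_
      have := H.diff
      fun_prop)
    (by have := H.diff
        fun_prop)
    (by
      intro z hz
      have hz2 := H.eq_zero.1 hz
      constructor
      · obtain ⟨j, hj⟩ := (grid_mem L hn z).1 hz2
        exact Finset.prod_eq_zero (Finset.mem_univ j) (H.eq_zero.2 hj)
      · have hg : HasDerivAt (fun z => s (n * z)) (deriv s (n * z) * (n * 1)) z :=
          HasDerivAt.comp z (H.diff (n * z)).hasDerivAt ((hasDerivAt_id z).const_mul (n : ℂ))
        rw [hg.deriv, mul_one]
        exact mul_ne_zero (H.deriv_ne hz2) hn0)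
  set W := ∑ j, gw L n j with hW
  set S := ∑ j, ‖gw L n j‖ ^ 2 with hS
  let k : ℂ → ℂ := fun z => h z * Complex.exp (2 * (starRingEnd ℂ) W * z)
  have hk : Differentiable ℂ k := by
    have : Differentiable ℂ (fun z => Complex.exp (2 * (starRingEnd ℂ) W * z)) := by fun_prop
    exact hd.mul this
  have hsum : ∀ z, ∑ j, ‖z - gw L n j‖ ^ 2 = ‖(n : ℂ) * z‖ ^ 2 - 2 * ((starRingEnd ℂ) W * z).re + S := by
    intro z
    have e : ∀ j, ‖z - gw L n j‖ ^ 2 = ‖z‖ ^ 2 - 2 * ((starRingEnd ℂ) (gw L n j) * z).re + ‖gw L n j‖ ^ 2 := by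
      intro j
      rw [sub_eq_add_neg, nsq_add]; simp; ring
    simp only [e, Finset.sum_add_distrib, Finset.sum_sub_distrib, ← Finset.mul_sum]
    rw [← Complex.re_sum, ← Finset.sum_mul, ← map_sum, ← hW, ← hS]
    simp [mul_pow]
    left; ring
  have hn1 : ∀ z, ‖k z‖ * psi s (n * z) = (∏ j, psi s (z - gw L n j)) * Real.exp S := by
    intro z
    have e1 := congrArg (‖·‖) (hfg z)
    simp only [norm_mul, norm_prod] at e1
    simp only [norm_eq_psi s, Finset.prod_mul_distrib] at e1
    rw [← Real.exp_sum, hsum] at e1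
    simp only [k, norm_mul, Complex.norm_exp]
    have e2 : (2 * (starRingEnd ℂ) W * z).re = 2 * ((starRingEnd ℂ) W * z).re := by
      rw [mul_assoc]; simp
    rw [e2]
    have e3 : Real.exp (‖(n : ℂ) * z‖ ^ 2 - 2 * ((starRingEnd ℂ) W * z).re + S) * Real.exp (2 * ((starRingEnd ℂ) W * z).re)
       = Real.exp (‖(n : ℂ) * z‖ ^ 2) * Real.exp S := by
      rw [← Real.exp_add, ← Real.exp_add]; congr 1; ring
    have e4 := Real.exp_ne_zero (‖(n : ℂ) * z‖ ^ 2)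
    apply mul_right_cancel₀ e4
    linear_combination (-Real.exp (2 * ((starRingEnd ℂ) W * z).re)) * e1 + (∏ j, psi s (z - gw L n j)) * e3
  have hdense : Dense {z : ℂ | (n : ℂ) * z ∉ L.lattice} := by
    have hc : ({z : ℂ | (n : ℂ) * z ∈ L.lattice}).Countable := by
      have : (L.lattice : Set ℂ).Countable := Set.countable_coe_iff.1 (inferInstanceAs (Countable L.lattice))
      exact this.preimage_of_injOn (f := fun z => (n : ℂ) * z) (fun a _ b _ hab => mul_left_cancel₀ hn0 hab)
    exact hc.dense_compl ℝ
  have hper : ∀ ω ∈ L.lattice, Function.Periodic (fun z => ‖k z‖) ω := by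
    intro ω hω
    have := Continuous.ext_on hdense (f := fun z => ‖k (z + ω)‖) (g := fun z => ‖k z‖)
      (by have := hk.continuous; fun_prop) (by have := hk.continuous; fun_prop) (by
        intro z hz
        dsimp only
        have a1 := hn1 z
        have a2 := hn1 (z + ω)
        have hnω : (n : ℂ) * ω ∈ L.lattice := by
          have := L.lattice.smul_mem (n : ℤ) hω
          simpa using this
        rw [mul_add, H.per hnω] at a2
        have e : ∀ j, psi s (z + ω - gw L n j) = psi s (z - gw L n j) := by
          intro j
          rw [show z + ω - gw L n j = z - gw L n j + ω by ring, H.per hω]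
        simp only [e] at a2
        have : psi s (n * z) ≠ 0 := fun h => hz (H.eq_zero.1 (psi_eq_zero.1 h))
        exact mul_right_cancel₀ this (a2.trans a1.symm))
    exact fun z => congrFun this z
  obtain ⟨C, hC⟩ := bdd_of_per h1 h1' h2 (G := fun z => ‖k z‖) hk.continuous.norm
    (hper _ L.ω₁_mem_lattice) (hper _ L.ω₂_mem_lattice)
  have hconst : ∀ z, k z = k 0 := fun z => hk.apply_eq_apply_of_bounded
    (isBounded_iff_forall_norm_le.2 ⟨C, by rintro _ ⟨y, rfl⟩; exact hC y⟩) z 0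
  refine ⟨Real.log ‖k 0‖ - S, fun z hz => ?_⟩
  have g1 := hn1 z
  rw [hconst z] at g1
  have p1 : s (n * z) ≠ 0 := fun h => hz (H.eq_zero.1 h)
  have p2 : ∀ j, s (z - gw L n j) ≠ 0 := fun j h => hz ((grid_mem L hn z).2 ⟨j, H.eq_zero.1 h⟩)
  have q1 : psi s (n * z) ≠ 0 := fun h => p1 (psi_eq_zero.1 h)
  have q2 : ∀ j ∈ Finset.univ, psi s (z - gw L n j) ≠ 0 := fun j _ h => p2 j (psi_eq_zero.1 h)
  have q3 : ∏ j, psi s (z - gw L n j) ≠ 0 := Finset.prod_ne_zero_iff.2 q2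
  have q4 : ‖k 0‖ ≠ 0 := by
    intro h
    rw [h, zero_mul] at g1
    exact mul_ne_zero q3 (Real.exp_ne_zero S) g1.symm
  have g2 := congrArg Real.log g1
  rw [Real.log_mul q4 q1, Real.log_mul q3 (Real.exp_ne_zero S), Real.log_exp, Real.log_prod q2] at g2
  linarith

end AnaPart2


section MeasPart

open Filter Topology

noncomputable def phi (a b : ℂ) (p : ℝ × ℝ) : ℂ := (p.1 : ℂ) * a + (p.2 : ℂ) * b

lemma phi_cont (a b : ℂ) : Continuous (phi a b) := by unfold phi; fun_prop

lemma meanD (a b : ℂ) (h1 : a.im = 0) (h1' : 0 < a.re) (h2 : 0 < b.im)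
    (harea : a.re * b.im = Real.pi / 2) (f : ℂ → ℝ) :
    2 / Real.pi * ∫ z in fundDomain a b, f z =
      ∫ p in Set.Ico (0 : ℝ) 1 ×ˢ Set.Ico (0 : ℝ) 1, f (phi a b p) := by
  let M : ℝ × ℝ →L[ℝ] ℝ × ℝ := LinearMap.toContinuousLinearMap
    (Matrix.toLin (Module.Basis.finTwoProd ℝ) (Module.Basis.finTwoProd ℝ) !![a.re, b.re; 0, b.im])
  have hM : ∀ p, M p = (a.re * p.1 + b.re * p.2, b.im * p.2) := by
    intro p
    simp [M, Matrix.toLin_finTwoProd_apply]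
  have hdet : M.det = Real.pi / 2 := by
    simp [M, harea]
  have he : ∀ p, Complex.measurableEquivRealProd (phi a b p) = M p := by
    intro p
    rw [hM, Complex.measurableEquivRealProd_apply, phi]
    ext
    · simp; ring
    · simp [h1]; ring
  have hinj : Function.Injective M := by
    intro p q h
    rw [hM, hM, Prod.mk.injEq] at h
    have e2 : p.2 = q.2 := mul_left_cancel₀ h2.ne' h.2
    have e1 : p.1 = q.1 := by
      apply mul_left_cancel₀ h1'.ne'
      rw [e2] at h; linarith [h.1]
    exact Prod.ext e1 e2
  have hD : fundDomain a b = Complex.measurableEquivRealProd ⁻¹' (M '' (Set.Ico (0 : ℝ) 1 ×ˢ Set.Ico (0 : ℝ) 1)) := by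
    ext z
    constructor
    · rintro ⟨p, hp, rfl⟩
      exact ⟨p, hp, (he p).symm⟩
    · rintro ⟨p, hp, hz⟩
      refine ⟨p, hp, ?_⟩
      rw [← he p] at hz
      exact Complex.measurableEquivRealProd.injective hz
  have k1 := Complex.volume_preserving_equiv_real_prod.setIntegral_preimage_emb
    Complex.measurableEquivRealProd.measurableEmbedding
    (fun q => f (Complex.measurableEquivRealProd.symm q)) (M '' (Set.Ico (0 : ℝ) 1 ×ˢ Set.Ico (0 : ℝ) 1))
  rw [← hD] at k1
  simp only [MeasurableEquiv.symm_apply_apply] at k1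
  rw [k1, integral_image_eq_integral_abs_det_fderiv_smul volume (measurableSet_Ico.prod measurableSet_Ico)
    (fun x _ => M.hasFDerivWithinAt) hinj.injOn]
  have : ∀ p, f (Complex.measurableEquivRealProd.symm (M p)) = f (phi a b p) := by
    intro p; rw [← he p]; simp
  simp only [this, hdet, smul_eq_mul]
  rw [integral_const_mul, ← mul_assoc, abs_of_pos (by positivity)]
  have := Real.pi_ne_zero
  field_simp

abbrev TT := UnitAddCircle × UnitAddCircle

noncomputable def muT : Measure TT := (volume : Measure UnitAddCircle).prod volume

instance : IsProbabilityMeasure muT := by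
  have : IsProbabilityMeasure (volume : Measure UnitAddCircle) := ⟨UnitAddCircle.measure_univ⟩
  unfold muT; infer_instance

instance : Measure.IsAddHaarMeasure muT := by
  unfold muT; infer_instance

noncomputable def ppi (p : ℝ × ℝ) : TT := ((p.1 : UnitAddCircle), (p.2 : UnitAddCircle))

lemma ppi_surj : Function.Surjective ppi := by
  rintro ⟨x, y⟩
  obtain ⟨t, rfl⟩ := QuotientAddGroup.mk_surjective x
  obtain ⟨u, rfl⟩ := QuotientAddGroup.mk_surjective y
  exact ⟨(t, u), rfl⟩

lemma ppi_mp (a : ℝ) : MeasurePreserving ppi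
    ((volume.restrict (Set.Ioc a (a + 1))).prod (volume.restrict (Set.Ioc a (a + 1)))) muT :=
  (AddCircle.measurePreserving_mk 1 a).prod (AddCircle.measurePreserving_mk 1 a)

lemma mean_eq (a b : ℂ) (h1 : a.im = 0) (h1' : 0 < a.re) (h2 : 0 < b.im)
    (harea : a.re * b.im = Real.pi / 2) {f : ℂ → ℝ} {F : TT → ℝ} (hF : Measurable F)
    (h : ∀ p, f (phi a b p) = F (ppi p)) :
    2 / Real.pi * ∫ z in fundDomain a b, f z = ∫ x, F x ∂muT := by
  rw [meanD a b h1 h1' h2 harea]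
  simp only [h]
  have hr : (volume : Measure (ℝ × ℝ)).restrict (Set.Ico (0 : ℝ) 1 ×ˢ Set.Ico (0 : ℝ) 1) =
      (volume.restrict (Set.Ioc (0:ℝ) (0 + 1))).prod (volume.restrict (Set.Ioc (0:ℝ) (0 + 1))) := by
    rw [Measure.volume_eq_prod, ← Measure.prod_restrict, zero_add, Measure.restrict_congr_set Ico_ae_eq_Ioc]
  rw [hr, ← (ppi_mp 0).map_eq, integral_map (ppi_mp 0).aemeasurable hF.aestronglyMeasurable]

lemma muT_zero : muT {0} = 0 := by
  have : ({0} : Set TT) = {0} ×ˢ {0} := by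
    rw [Set.singleton_prod_singleton]; rfl
  have h0 : (volume : Measure UnitAddCircle) {0} = 0 := by
    have := AddCircle.volume_closedBall 1 (x := (0 : AddCircle (1:ℝ))) 0
    rw [Metric.closedBall_zero] at this
    simpa using this
  rw [this, muT, Measure.prod_prod, h0, zero_mul]

lemma muT_smul {n : ℕ} (hn : 0 < n) : MeasurePreserving (fun x : TT => (n : ℤ) • x) muT muT :=
  Measure.measurePreserving_zsmul muT (by exact_mod_cast hn.ne')

lemma muT_ae {n : ℕ} (hn : 0 < n) : ∀ᵐ x ∂muT, (n : ℤ) • x ≠ 0 := by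
  have := (muT_smul hn).quasiMeasurePreserving.ae (p := fun x => x ≠ 0)
    (by rw [ae_iff]; simpa using muT_zero)
  exact this

lemma muT_sub (w : TT) : MeasurePreserving (fun x : TT => x - w) muT muT :=
  measurePreserving_sub_right muT w

noncomputable def bar (a b : ℂ) (f : ℂ → ℝ) (x : TT) : ℝ :=
  f (phi a b ((AddCircle.measurableEquivIco (1:ℝ) 0 x.1 : ℝ), (AddCircle.measurableEquivIco (1:ℝ) 0 x.2 : ℝ)))

lemma bar_meas (a b : ℂ) {f : ℂ → ℝ} (hf : Measurable f) : Measurable (bar a b f) := by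
  unfold bar
  refine hf.comp ((phi_cont a b).measurable.comp (Measurable.prodMk ?_ ?_))
  · exact measurable_subtype_coe.comp ((AddCircle.measurableEquivIco (1:ℝ) 0).measurable.comp measurable_fst)
  · exact measurable_subtype_coe.comp ((AddCircle.measurableEquivIco (1:ℝ) 0).measurable.comp measurable_snd)

lemma ico_coe (t : ℝ) : ∃ m : ℤ, t = (AddCircle.measurableEquivIco (1:ℝ) 0 (t : AddCircle (1:ℝ)) : ℝ) + m := by
  have := AddCircle.coe_equivIco (p := (1:ℝ)) (a := 0) (y := (t : AddCircle (1:ℝ)))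
  have h2 := (QuotientAddGroup.eq.1 this)
  obtain ⟨m, hm⟩ := AddSubgroup.mem_zmultiples_iff.1 h2
  refine ⟨m, ?_⟩
  have e : (AddCircle.measurableEquivIco (1:ℝ) 0 (t : AddCircle (1:ℝ)) : ℝ) =
    (AddCircle.equivIco (1:ℝ) 0 (t : AddCircle (1:ℝ)) : ℝ) := rfl
  rw [e]
  simp only [zsmul_one] at hm
  linarith

lemma bar_ppi {a b : ℂ} {f : ℂ → ℝ} (ha : Function.Periodic f a) (hb : Function.Periodic f b) (p : ℝ × ℝ) :
    bar a b f (ppi p) = f (phi a b p) := by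
  obtain ⟨m, hm⟩ := ico_coe p.1
  obtain ⟨n, hn⟩ := ico_coe p.2
  have := ((ha.int_mul m).add_period (hb.int_mul n)) (phi a b ((AddCircle.measurableEquivIco (1:ℝ) 0 (p.1 : AddCircle (1:ℝ)) : ℝ),
    (AddCircle.measurableEquivIco (1:ℝ) 0 (p.2 : AddCircle (1:ℝ)) : ℝ)))
  rw [bar, ppi, ← this]
  congr 1
  rw [phi, phi]
  dsimp only
  nth_rewrite 2 [hm]
  nth_rewrite 2 [hn]
  push_cast
  ring

end MeasPart


section MeasPart2

open Filter Topology

noncomputable def lps (s : ℂ → ℂ) (z : ℂ) : ℝ := Real.log (psi s z)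

lemma SS.lp_per {L : PeriodPair} {s : ℂ → ℂ} (H : SS L s) {ω : ℂ} (hω : ω ∈ L.lattice) :
    Function.Periodic (lps s) ω := fun z => by rw [lps, lps, H.per hω]

lemma SS.lp_meas {L : PeriodPair} {s : ℂ → ℂ} (H : SS L s) : Measurable (lps s) :=
  Real.measurable_log.comp H.cont.measurable

noncomputable def vT (L : PeriodPair) (s : ℂ → ℂ) : TT → ℝ := bar L.ω₁ L.ω₂ (lps s)

lemma SS.vT_ppi {L : PeriodPair} {s : ℂ → ℂ} (H : SS L s) (p : ℝ × ℝ) :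
    vT L s (ppi p) = lps s (phi L.ω₁ L.ω₂ p) :=
  bar_ppi (H.lp_per L.ω₁_mem_lattice) (H.lp_per L.ω₂_mem_lattice) p

lemma SS.vT_meas {L : PeriodPair} {s : ℂ → ℂ} (H : SS L s) : Measurable (vT L s) :=
  bar_meas _ _ H.lp_meas

lemma SS.vT_le {L : PeriodPair} {s : ℂ → ℂ} (H : SS L s) (h1 : L.ω₁.im = 0) (h1' : 0 < L.ω₁.re)
    (h2 : 0 < L.ω₂.im) : ∃ M : ℝ, ∀ x, vT L s x ≤ M := by
  obtain ⟨C, hC⟩ := bdd_of_per h1 h1' h2 H.cont (H.per L.ω₁_mem_lattice) (H.per L.ω₂_mem_lattice)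
  refine ⟨Real.log (max C 1), fun x => ?_⟩
  obtain ⟨p, rfl⟩ := ppi_surj x
  rw [H.vT_ppi, lps]
  rcases (psi_nonneg s (phi L.ω₁ L.ω₂ p)).eq_or_lt with h | h
  · rw [← h, Real.log_zero]; exact Real.log_nonneg (le_max_right _ _)
  · exact Real.log_le_log h ((hC _).trans (le_max_left _ _))

lemma Qs_lattice (L : PeriodPair) {p : ℝ × ℝ} (hp : p ∈ Set.Icc (-(1/2) : ℝ) (1/2) ×ˢ Set.Icc (-(1/2) : ℝ) (1/2))
    (h : phi L.ω₁ L.ω₂ p ∈ L.lattice) : p = 0 := by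
  obtain ⟨m, n, e⟩ := PeriodPair.mem_lattice.1 h
  have := ind' L (a := p.1) (b := p.2) (c := m) (d := n) (by rw [phi] at e; push_cast; exact e.symm)
  obtain ⟨⟨a1, a2⟩, ⟨b1, b2⟩⟩ := hp
  have key : ∀ m : ℤ, -(1/2 : ℝ) ≤ m → (m : ℝ) ≤ 1/2 → m = 0 := by
    intro m u1 u2
    have l1 : (m : ℝ) < 1 := by linarith
    have l2 : (-1 : ℝ) < m := by linarith
    have l3 : m < 1 := by exact_mod_cast l1
    have l4 : -1 < m := by exact_mod_cast l2
    omega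
  rw [this.1] at a1 a2
  rw [this.2] at b1 b2
  refine Prod.ext ?_ ?_
  · rw [this.1, key m a1 a2]; simp
  · rw [this.2, key n b1 b2]; simp

lemma SS.vT_int {L : PeriodPair} {s : ℂ → ℂ} (H : SS L s)
    (h1 : L.ω₁.im = 0) (h2 : 0 < L.ω₂.im) : Integrable (vT L s) muT := by
  rw [← (ppi_mp (-(1/2))).integrable_comp H.vT_meas.aestronglyMeasurable]
  set μ := volume.restrict (Set.Ioc (-(1/2) : ℝ) (-(1/2) + 1)) with hμ
  have hd := (dslope_diff H.diff 0).continuous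
  have hQne : ∀ z ∈ Qs L, dslope s 0 z ≠ 0 := by
    intro z hz h0
    have e := dslope_eq 0 z H.zero
    rw [h0, mul_zero] at e
    obtain ⟨p, hp, rfl⟩ := hz
    have hp0 := Qs_lattice L hp (H.eq_zero.1 e)
    subst hp0
    simp [H.d0] at h0
  have hc : ContinuousOn (fun z => Real.log ‖dslope s 0 z‖ - ‖z‖ ^ 2) (Qs L) := by
    refine ContinuousOn.sub (ContinuousOn.log hd.norm.continuousOn fun z hz => norm_ne_zero_iff.2 (hQne z hz)) ?_
    fun_prop
  obtain ⟨C, hC⟩ := (Qs_compact L).exists_bound_of_continuousOn hc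
  obtain ⟨R, hR⟩ := (Qs_compact L).isBounded.exists_norm_le
  have hlog : Integrable Real.log μ := by
    have := (intervalIntegral.intervalIntegrable_log' (a := -(1/2)) (b := -(1/2) + 1)).1
    exact this
  have hdom : Integrable (fun p : ℝ × ℝ => |Real.log p.2| + (|Real.log L.ω₂.im| + Real.log (max R 1) + C)) (μ.prod μ) :=
    (hlog.abs.comp_snd μ).add (integrable_const _)
  refine hdom.mono' ?_ ?_
  · exact (H.vT_meas.comp (ppi_mp (-(1/2))).measurable).aestronglyMeasurable
  · have hmem : ∀ᵐ p ∂(μ.prod μ), p ∈ Set.Ioc (-(1/2) : ℝ) (-(1/2) + 1) ×ˢ Set.Ioc (-(1/2) : ℝ) (-(1/2) + 1) := by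
      rw [hμ, Measure.prod_restrict]
      exact ae_restrict_mem (measurableSet_Ioc.prod measurableSet_Ioc)
    have hne : ∀ᵐ p ∂(μ.prod μ), p.2 ≠ 0 := by
      have : ∀ᵐ y ∂μ, y ≠ 0 := by
        apply ae_restrict_of_ae
        rw [ae_iff]; simp
      exact Measure.quasiMeasurePreserving_snd.ae this
    filter_upwards [hmem, hne] with p hp hp2
    have hp' : p ∈ Set.Icc (-(1/2) : ℝ) (1/2) ×ˢ Set.Icc (-(1/2) : ℝ) (1/2) := by
      obtain ⟨⟨a1, a2⟩, ⟨b1, b2⟩⟩ := hp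
      exact ⟨⟨a1.le, by linarith⟩, ⟨b1.le, by linarith⟩⟩
    have hQ : phi L.ω₁ L.ω₂ p ∈ Qs L := ⟨p, hp', rfl⟩
    rw [Function.comp, H.vT_ppi, lps]
    set z := phi L.ω₁ L.ω₂ p with hz
    have him : z.im = p.2 * L.ω₂.im := by simp [hz, phi, h1]
    have hnz : z ≠ 0 := by
      intro h; rw [h] at him; simp at him
      rcases him with h | h
      · exact hp2 h
      · exact h2.ne' h
    have hs : s z ≠ 0 := by
      rw [dslope_eq 0 z H.zero, sub_zero]
      exact mul_ne_zero hnz (hQne z hQ)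
    rw [log_psi hs, Vf]
    have e : Real.log ‖s z‖ = Real.log ‖z‖ + Real.log ‖dslope s 0 z‖ := by
      rw [dslope_eq 0 z H.zero, sub_zero, norm_mul,
        Real.log_mul (norm_ne_zero_iff.2 hnz) (norm_ne_zero_iff.2 (hQne z hQ))]
    have b1 := hC z hQ
    have b2 : Real.log ‖z‖ ≤ Real.log (max R 1) :=
      Real.log_le_log (norm_pos_iff.2 hnz) ((hR z hQ).trans (le_max_left _ _))
    have b3 : Real.log p.2 + Real.log L.ω₂.im ≤ Real.log ‖z‖ := by
      rw [← Real.log_mul hp2 h2.ne', ← him, ← Real.log_abs]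
      refine Real.log_le_log (abs_pos.2 ?_) (Complex.abs_im_le_norm z)
      rw [him]; exact mul_ne_zero hp2 h2.ne'
    have b4 : 0 ≤ Real.log (max R 1) := Real.log_nonneg (le_max_right _ _)
    rw [Real.norm_eq_abs] at b1 ⊢
    rw [abs_le] at b1
    rw [e, abs_le]
    have c1 := neg_abs_le (Real.log p.2)
    have c2 := neg_abs_le (Real.log L.ω₂.im)
    have c3 := abs_nonneg (Real.log p.2)
    have c4 := abs_nonneg (Real.log L.ω₂.im)
    constructor <;> linarith [b1.1, b1.2]

lemma SS.gridT {L : PeriodPair} {s : ℂ → ℂ} (H : SS L s) (h1 : L.ω₁.im = 0) (h1' : 0 < L.ω₁.re)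
    (h2 : 0 < L.ω₂.im) {n : ℕ} (hn : 0 < n) :
    ∃ (w : Fin n × Fin n → TT) (c : ℝ), ∀ᵐ x ∂muT, ∑ j, vT L s (x - w j) = vT L s ((n : ℤ) • x) + c := by
  obtain ⟨c, hc⟩ := H.grid h1 h1' h2 hn
  have hn0 : (n : ℂ) ≠ 0 := by exact_mod_cast hn.ne'
  refine ⟨fun j => ppi ((j.1 : ℕ) / n, (j.2 : ℕ) / n), c, ?_⟩
  filter_upwards [muT_ae hn] with x hx
  obtain ⟨p, rfl⟩ := ppi_surj x
  have e1 : (n : ℤ) • ppi p = ppi (n * p.1, n * p.2) := by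
    have : ∀ t : ℝ, ((n * t : ℝ) : AddCircle (1:ℝ)) = (n : ℤ) • (t : AddCircle (1:ℝ)) := by
      intro t
      rw [← AddCircle.coe_zsmul]; simp
    simp only [ppi]
    rw [this, this]; rfl
  have e2 : ∀ j : Fin n × Fin n, ppi p - ppi ((j.1 : ℕ) / n, (j.2 : ℕ) / n) =
      ppi (p.1 - (j.1 : ℕ) / n, p.2 - (j.2 : ℕ) / n) := fun j => rfl
  have e3 : phi L.ω₁ L.ω₂ (n * p.1, n * p.2) = n * phi L.ω₁ L.ω₂ p := by
    simp only [phi]; push_cast; ring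
  have e4 : ∀ j : Fin n × Fin n, phi L.ω₁ L.ω₂ (p.1 - (j.1 : ℕ) / n, p.2 - (j.2 : ℕ) / n) =
      phi L.ω₁ L.ω₂ p - gw L n j := by
    intro j
    simp only [phi, gw]; push_cast; ring
  simp only [e1, e2, H.vT_ppi, e3, e4]
  apply hc
  intro hm
  obtain ⟨a, b, e⟩ := PeriodPair.mem_lattice.1 hm
  rw [← e3] at e
  have := ind' L (a := n * p.1) (b := n * p.2) (c := a) (d := b) (by
    rw [phi] at e; push_cast at e ⊢; exact e.symm)
  apply hx
  rw [e1, this.1, this.2]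
  have z0 : ∀ m : ℤ, ((m : ℝ) : AddCircle (1:ℝ)) = 0 := by
    intro m
    rw [AddCircle.coe_eq_zero_iff]; exact ⟨m, by simp⟩
  exact Prod.ext (z0 a) (z0 b)

end MeasPart2


section FinalPart

open Filter Topology

lemma int_shift {v : TT → ℝ} (hv : Integrable v muT) (w : TT) :
    Integrable (fun x => v (x - w)) muT ∧ ∫ x, v (x - w) ∂muT = ∫ x, v x ∂muT :=
  ⟨((muT_sub w).integrable_comp hv.aestronglyMeasurable).2 hv, by
    have h := (muT_sub w).map_eq
    conv_rhs => rw [← h]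
    rw [integral_map (muT_sub w).aemeasurable (by rw [h]; exact hv.aestronglyMeasurable)]⟩

lemma int_smul {v : TT → ℝ} (hv : Integrable v muT) {n : ℕ} (hn : 0 < n) :
    Integrable (fun x : TT => v ((n : ℤ) • x)) muT ∧ ∫ x, v ((n : ℤ) • x) ∂muT = ∫ x, v x ∂muT :=
  ⟨((muT_smul hn).integrable_comp hv.aestronglyMeasurable).2 hv, by
    have h := (muT_smul hn).map_eq
    conv_rhs => rw [← h]
    rw [integral_map (muT_smul hn).aemeasurable (by rw [h]; exact hv.aestronglyMeasurable)]⟩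

lemma exp_int {v : TT → ℝ} (hm : Measurable v) {M : ℝ} (hM : ∀ x, v x ≤ M) (A : ℝ)
    {β : ℝ} (hβ : 0 < β) {N : ℕ} (w : Fin N → TT) :
    Measurable (fun x => Real.exp (∑ j, β * (v (x - w j) - A))) ∧
    Integrable (fun x => Real.exp (∑ j, β * (v (x - w j) - A))) muT := by
  have h1 : Measurable (fun x => Real.exp (∑ j, β * (v (x - w j) - A))) := by
    refine Real.measurable_exp.comp (Finset.measurable_sum _ fun j _ => ?_)
    exact ((hm.comp (muT_sub (w j)).measurable).sub_const A).const_mul β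
  refine ⟨h1, Integrable.of_bound h1.aestronglyMeasurable (Real.exp (∑ j : Fin N, β * (M - A))) (.of_forall fun x => ?_)⟩
  rw [Real.norm_eq_abs, Real.abs_exp, Real.exp_le_exp]
  refine Finset.sum_le_sum fun j _ => ?_
  have := hM (x - w j)
  gcongr

lemma lowerT {v : TT → ℝ} (hm : Measurable v) (hv : Integrable v muT) {M : ℝ} (hM : ∀ x, v x ≤ M)
    {β : ℝ} (hβ : 0 < β) {N : ℕ} (w : Fin N → TT) :
    1 ≤ ∫ x, Real.exp (∑ j, β * (v (x - w j) - ∫ y, v y ∂muT)) ∂muT := by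
  set A := ∫ y, v y ∂muT with hA
  have hj : ∀ j ∈ Finset.univ, Integrable (fun x => β * (v (x - w j) - A)) muT := fun j _ =>
    ((int_shift hv (w j)).1.sub (integrable_const A)).const_mul β
  have hs : Integrable (fun x => ∑ j, β * (v (x - w j) - A)) muT := integrable_finsetSum _ hj
  have h0 : ∫ x, ∑ j, β * (v (x - w j) - A) ∂muT = 0 := by
    rw [integral_finsetSum _ hj]
    refine Finset.sum_eq_zero fun j _ => ?_
    rw [integral_const_mul, integral_sub (int_shift hv (w j)).1 (integrable_const A), (int_shift hv (w j)).2]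
    simp [hA]
  calc (1 : ℝ) = ∫ x, (∑ j, β * (v (x - w j) - A) + 1) ∂muT := by
        rw [integral_add hs (integrable_const 1), h0]; simp
    _ ≤ _ := integral_mono (hs.add (integrable_const 1)) (exp_int hm hM A hβ w).2
        fun x => Real.add_one_le_exp _

def PP (v : TT → ℝ) (N : ℕ) (B : ℝ) : Prop :=
  ∃ w : Fin N → TT, ∀ᵐ x ∂muT, ∑ j, (v (x - w j) - ∫ y, v y ∂muT) ≤ B

lemma PP_add {v : TT → ℝ} {N N' : ℕ} {B B' : ℝ} (h : PP v N B) (h' : PP v N' B') :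
    PP v (N + N') (B + B') := by
  obtain ⟨w, hw⟩ := h
  obtain ⟨w', hw'⟩ := h'
  refine ⟨Fin.append w w', ?_⟩
  filter_upwards [hw, hw'] with x h1 h2
  rw [Fin.sum_univ_add]
  simp only [Fin.append_left, Fin.append_right]
  linarith

lemma PP_sq {L : PeriodPair} {s : ℂ → ℂ} (H : SS L s) (h1 : L.ω₁.im = 0) (h1' : 0 < L.ω₁.re)
    (h2 : 0 < L.ω₂.im) {M : ℝ} (hM : ∀ x, vT L s x ≤ M) (n : ℕ) :
    PP (vT L s) (n ^ 2) (max (M - ∫ y, vT L s y ∂muT) 0) := by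
  rcases Nat.eq_zero_or_pos n with rfl | hn
  · refine ⟨fun _ => 0, .of_forall fun x => ?_⟩
    have : ∑ j : Fin (0 ^ 2), (vT L s (x - 0) - ∫ y, vT L s y ∂muT) = 0 :=
      Finset.sum_eq_zero fun j _ => absurd j.2 (by simp)
    rw [this]
    exact le_max_right _ _
  · have hv := H.vT_int h1 h2
    set A := ∫ y, vT L s y ∂muT with hA
    obtain ⟨w, c, hw⟩ := H.gridT h1 h1' h2 hn
    have hc : (n : ℝ) ^ 2 * A = A + c := by
      have := integral_congr_ae hw
      rw [integral_add (int_smul hv hn).1 (integrable_const c), (int_smul hv hn).2,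
        integral_finsetSum _ fun j _ => (int_shift hv (w j)).1] at this
      simp only [fun j => (int_shift hv (w j)).2] at this
      simp at this
      rw [← hA] at this
      linarith
    let e : Fin (n ^ 2) ≃ Fin n × Fin n := (finCongr (pow_two n)).trans finProdFinEquiv.symm
    refine ⟨fun j => w (e j), ?_⟩
    filter_upwards [hw] with x hx
    rw [e.sum_comp (fun j => vT L s (x - w j) - A), Finset.sum_sub_distrib, hx]
    have := hM ((n : ℤ) • x)
    refine le_trans ?_ (le_max_left _ _)
    rw [Finset.sum_const, Finset.card_univ, Fintype.card_prod, Fintype.card_fin, nsmul_eq_mul]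
    push_cast
    linarith

lemma PP_all {L : PeriodPair} {s : ℂ → ℂ} (H : SS L s) (h1 : L.ω₁.im = 0) (h1' : 0 < L.ω₁.re)
    (h2 : 0 < L.ω₂.im) : ∃ B, 0 < B ∧ ∀ N, PP (vT L s) N B := by
  obtain ⟨M, hM⟩ := H.vT_le h1 h1' h2
  set C := max (M - ∫ y, vT L s y ∂muT) 0 with hC
  have hC0 : 0 ≤ C := le_max_right _ _
  refine ⟨C + C + C + C + 1, by linarith, fun N => ?_⟩
  obtain ⟨a, b, c, d, rfl⟩ := Nat.sum_four_squares N
  obtain ⟨w, hw⟩ := PP_add (PP_add (PP_add (PP_sq H h1 h1' h2 hM a) (PP_sq H h1 h1' h2 hM b))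
    (PP_sq H h1 h1' h2 hM c)) (PP_sq H h1 h1' h2 hM d)
  refine ⟨w, ?_⟩
  filter_upwards [hw] with x hx
  linarith

lemma phi_sub (a b : ℂ) (p q : ℝ × ℝ) : phi a b p - phi a b q = phi a b (p - q) := by
  simp [phi]; ring

lemma val_eq {L : PeriodPair} (H : SS L (sigmaStar L.ω₁ L.ω₂)) (h1 : L.ω₁.im = 0) (h1' : 0 < L.ω₁.re)
    (h2 : 0 < L.ω₂.im) (harea : L.ω₁.re * L.ω₂.im = Real.pi / 2) {M : ℝ}
    (hM : ∀ x, vT L (sigmaStar L.ω₁ L.ω₂) x ≤ M) {β : ℝ} (hβ : 0 < β) {N : ℕ} (q : Fin N → ℝ × ℝ) :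
    2 / Real.pi * ∫ z in fundDomain L.ω₁ L.ω₂,
      Real.exp (∑ j, β * Utorus L.ω₁ L.ω₂ z (phi L.ω₁ L.ω₂ (q j))) =
    ∫ x, Real.exp (∑ j, β * (vT L (sigmaStar L.ω₁ L.ω₂) (x - ppi (q j)) -
      ∫ y, vT L (sigmaStar L.ω₁ L.ω₂) y ∂muT)) ∂muT := by
  set s := sigmaStar L.ω₁ L.ω₂ with hs
  have hnull : ∀ᵐ z : ℂ, z ∉ L.lattice := by
    have hc : (L.lattice : Set ℂ).Countable := Set.countable_coe_iff.1 (inferInstanceAs (Countable L.lattice))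
    exact hc.ae_notMem volume
  have hnull2 : ∀ w : ℂ, ∀ᵐ z : ℂ, z - w ∉ L.lattice := fun w =>
    (measurePreserving_sub_right volume w).quasiMeasurePreserving.ae hnull
  have hlp : ∀ z, z ∉ L.lattice → lps s z = Real.log ‖s z‖ - ‖z‖ ^ 2 := fun z hz => log_psi (H.ne z hz)
  have hA : Aconst L.ω₁ L.ω₂ = ∫ y, vT L s y ∂muT := by
    rw [Aconst, ← mean_eq L.ω₁ L.ω₂ h1 h1' h2 harea H.vT_meas (f := lps s) (fun p => (H.vT_ppi p).symm)]
    congr 1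
    apply integral_congr_ae
    apply ae_restrict_of_ae
    filter_upwards [hnull] with z hz
    rw [hlp z hz]
  set A := ∫ y, vT L s y ∂muT with hA'
  rw [← mean_eq L.ω₁ L.ω₂ h1 h1' h2 harea (exp_int H.vT_meas hM A hβ fun j => ppi (q j)).1
    (f := fun z => Real.exp (∑ j, β * (lps s (z - phi L.ω₁ L.ω₂ (q j)) - A)))
    (fun p => by
      have : ∀ j, ppi p - ppi (q j) = ppi (p - q j) := fun j => rfl
      simp only [phi_sub, this, H.vT_ppi])]
  congr 1
  apply integral_congr_ae
  apply ae_restrict_of_ae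
  have hall : ∀ᵐ z : ℂ, ∀ j, z - phi L.ω₁ L.ω₂ (q j) ∉ L.lattice := ae_all_iff.2 fun j => hnull2 _
  filter_upwards [hall] with z hz
  congr 1
  refine Finset.sum_congr rfl fun j _ => ?_
  rw [hlp _ (hz j), Utorus, hA]

theorem main_L (L : PeriodPair) (h1 : L.ω₁.im = 0) (h1' : 0 < L.ω₁.re)
    (h2 : 0 < L.ω₂.im) (harea : L.ω₁.re * L.ω₂.im = Real.pi / 2) :
    ∃ K : ℝ, 1 < K ∧
      ∀ N : ℕ, 1 ≤ N → ∀ β : ℝ, 0 < β →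
        1 ≤ ThetaTorus L.ω₁ L.ω₂ N β ∧ ThetaTorus L.ω₁ L.ω₂ N β ≤ K ^ β := by
  have H : SS L (sigmaStar L.ω₁ L.ω₂) :=
    { diff := differentiable_sigmaStar L
      zero := sigmaStar_zero L
      ne := fun z hz => sigmaStar_ne L hz
      d0 := deriv_sigmaStar_zero L
      a1 := sigmaStar_add₁ L h1 h1'
      a2 := sigmaStar_add₂ L h1 h1' h2 harea }
  obtain ⟨M, hM⟩ := H.vT_le h1 h1' h2
  obtain ⟨B, hB, hP⟩ := PP_all H h1 h1' h2
  have hv := H.vT_int h1 h2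
  refine ⟨Real.exp B, Real.one_lt_exp_iff.2 hB, fun N _ β hβ => ?_⟩
  have hlow : ∀ w : Fin N → ℂ, 1 ≤ 2 / Real.pi * ∫ z in fundDomain L.ω₁ L.ω₂,
      Real.exp (∑ j, β * Utorus L.ω₁ L.ω₂ z (w j)) := by
    intro w
    have : ∀ j, ∃ p, w j = phi L.ω₁ L.ω₂ p := by
      intro j
      obtain ⟨t, y, e⟩ := exists_coord h1 h1' h2 (w j)
      exact ⟨(t, y), e⟩
    choose q hq using this
    simp only [hq]
    rw [val_eq H h1 h1' h2 harea hM hβ q]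
    exact lowerT H.vT_meas hv hM hβ _
  refine ⟨le_ciInf hlow, ?_⟩
  obtain ⟨w, hw⟩ := hP N
  choose q hq using fun j => ppi_surj (w j)
  refine (ciInf_le ⟨1, by rintro _ ⟨w, rfl⟩; exact hlow w⟩ (fun j => phi L.ω₁ L.ω₂ (q j))).trans ?_
  rw [val_eq H h1 h1' h2 harea hM hβ q]
  simp only [hq]
  calc _ ≤ ∫ _, Real.exp (B * β) ∂muT := by
        refine integral_mono_ae (exp_int H.vT_meas hM _ hβ w).2 (integrable_const _) ?_
        filter_upwards [hw] with x hx
        rw [Real.exp_le_exp, ← Finset.mul_sum, mul_comm]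
        exact mul_le_mul_of_nonneg_right hx hβ.le
    _ = Real.exp B ^ β := by
        rw [integral_const, Real.exp_mul]; simp

end FinalPart

/-- uniform bounds on the torus packing number. -/
theorem thetaTorus_bounds (ω₁ ω₂ : ℂ)
    (h1 : ω₁.im = 0) (h1' : 0 < ω₁.re) (h2 : 0 < ω₂.im)
    (harea : ω₁.re * ω₂.im = Real.pi / 2) :
    ∃ K : ℝ, 1 < K ∧
      ∀ N : ℕ, 1 ≤ N → ∀ β : ℝ, 0 < β →
        1 ≤ ThetaTorus ω₁ ω₂ N β ∧ ThetaTorus ω₁ ω₂ N β ≤ K ^ β := by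
  have hi : LinearIndependent ℝ ![ω₁, ω₂] := by
    rw [LinearIndependent.pair_iff]
    intro a b h
    have him := congrArg Complex.im h
    have hre := congrArg Complex.re h
    simp [h1] at him hre
    have hb : b = 0 := by
      rcases him with h | h
      · exact h
      · exact absurd h h2.ne'
    subst hb
    simp at hre
    refine ⟨?_, rfl⟩
    rcases hre with h | h
    · exact h
    · exact absurd h h1'.ne'
  exact main_L ⟨ω₁, ω₂, hi⟩ h1 h1' h2 harea
end

section
/- Let Λ = ω₁ℤ + ω₂ℤ with ω₁ > 0 real, Im ω₂ > 0, and ω₁·Im ω₂ = π/2. For every integer N ≥ 1, every real β > 0, and every choice of points w₁, …, w_N ∈ ℂ, one has 1 ≤ (2/π) ∫_D exp(β U_{ℂ/Λ}(z,w₁) + ⋯ + β U_{ℂ/Λ}(z,w_N)) dA(z) ≤ E(βN, Λ), where D is a fundamental domain of Λ; moreover the upper bound E(βN, Λ) is attained with equality whenever w₁ = ⋯ = w_N. -/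
open MeasureTheory

/-- The quantity `E(γ, Λ)`. -/
noncomputable def Etorus (ω₁ ω₂ : ℂ) (γ : ℝ) : ℝ :=
  2 / Real.pi * ∫ z in fundDomain ω₁ ω₂, Real.exp (γ * Utorus ω₁ ω₂ z 0)


namespace TorusAux
open Complex Filter Topology
lemma E2_bound (u : ℂ) (hu : ‖u‖ ≤ 1/2) :
    ‖(1 - u) * exp (u + u^2/2) - 1‖ ≤ 20 * ‖u‖^3 := by
  set v := u + u^2/2 with hv
  have hu0 := norm_nonneg u
  have hvn : ‖v‖ ≤ 5/4 * ‖u‖ := by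
    calc ‖v‖ ≤ ‖u‖ + ‖u^2/2‖ := norm_add_le _ _
      _ = ‖u‖ + ‖u‖^2/2 := by simp
      _ ≤ _ := by nlinarith
  have h3 := Complex.exp_bound (x := v) (by linarith) (n := 3) (by norm_num)
  simp only [Finset.sum_range_succ, Finset.sum_range_zero] at h3
  norm_num [Nat.factorial] at h3
  have key : (1 - u) * exp v - 1 = (1-u) * (exp v - (1 + v + v^2/2)) - u^3 * (1/2 + 3*u/8 + u^2/8) := by
    rw [hv]; ring
  have hp : ‖1/2 + 3*u/8 + u^2/8‖ ≤ 1 := by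
    calc ‖1/2 + 3*u/8 + u^2/8‖ ≤ ‖(1/2:ℂ)‖ + ‖3*u/8‖ + ‖u^2/8‖ := norm_add₃_le
      _ = 1/2 + 3*‖u‖/8 + ‖u‖^2/8 := by simp
      _ ≤ 1 := by nlinarith
  have h1u : ‖1 - u‖ ≤ 3/2 := by
    calc ‖1 - u‖ ≤ ‖(1:ℂ)‖ + ‖u‖ := norm_sub_le _ _
      _ ≤ _ := by rw [norm_one]; linarith
  have hv3 : ‖v‖^3 ≤ 2 * ‖u‖^3 := by
    calc ‖v‖^3 ≤ (5/4 * ‖u‖)^3 := by gcongr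
      _ = 125/64 * ‖u‖^3 := by ring
      _ ≤ _ := by gcongr; norm_num
  rw [key]
  calc _ ≤ ‖(1-u) * (exp v - (1 + v + v^2/2))‖ + ‖u^3 * (1/2 + 3*u/8 + u^2/8)‖ := norm_sub_le _ _
    _ = ‖1-u‖ * ‖exp v - (1 + v + v^2/2)‖ + ‖u‖^3 * ‖1/2 + 3*u/8 + u^2/8‖ := by simp
    _ ≤ (3/2) * (2 * ‖u‖^3) + ‖u‖^3 * 1 := by
        gcongr
        refine h3.trans ?_
        nlinarith [pow_nonneg hu0 3]
    _ ≤ _ := by nlinarith [pow_nonneg hu0 3]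

variable (L : PeriodPair)

noncomputable def fac (l z : ℂ) : ℂ := (1 - z / l) * exp (z / l + z^2 / (2 * l^2))

lemma fac_zero (z : ℂ) : fac 0 z = 1 := by simp [fac]

noncomputable def PP (z : ℂ) : ℂ := ∏' l : L.lattice, fac l z

lemma wSigma_eq (z : ℂ) : wSigma L.ω₁ L.ω₂ z = z * PP L z := by
  unfold wSigma PP
  congr 1
  rw [← L.latticeEquivProd.symm.toEquiv.tprod_eq]
  have : (fun c : ℤ × ℤ => fac (L.latticeEquivProd.symm.toEquiv c : L.lattice) z).mulSupport ⊆ {p : ℤ × ℤ | p ≠ 0} := by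
    intro p hp
    simp only [Function.mem_mulSupport] at hp
    rintro rfl
    apply hp
    simp [fac_zero]
  have h := tprod_subtype_eq_of_mulSupport_subset this
  rw [← h]
  apply tprod_congr
  rintro ⟨p, hp⟩
  have := L.latticeEquiv_symm_apply p
  simp only [LinearEquiv.coe_toEquiv, this, fac]

lemma finite_lattice (R : ℝ) : {l : L.lattice | ‖(l:ℂ)‖ ≤ R}.Finite := by
  refine (isCompact_iff_finite.mp (isCompact_closedBall (0 : L.lattice) R)).subset ?_
  intro l hl
  simpa using hl

lemma summ3 : Summable fun l : L.lattice => ‖(l:ℂ)‖⁻¹^3 := by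
  have := ZLattice.summable_norm_rpow L.lattice (-3) (by simp; norm_num)
  refine this.congr fun l => ?_
  rw [Real.rpow_neg (norm_nonneg _)]
  norm_cast
  simp

lemma fac_bound (r : ℝ) : ∀ᶠ l : L.lattice in cofinite, ∀ z ∈ Metric.ball (0:ℂ) r,
    ‖fac l z - 1‖ ≤ 20 * r^3 * ‖(l:ℂ)‖⁻¹^3 := by
  refine (finite_lattice L (2 * r)).subset ?_
  intro l hl
  by_contra h
  apply hl
  intro z hz
  simp only [Set.mem_ofPred_eq, not_le] at h
  simp only [Metric.mem_ball, dist_zero_right] at hz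
  have hr : 0 < r := (norm_nonneg z).trans_lt hz
  have hl0 : 0 < ‖(l:ℂ)‖ := by linarith
  have hz2 : ‖z / l‖ ≤ 1/2 := by
    rw [norm_div, div_le_iff₀ hl0]; linarith
  have := E2_bound (z / l) hz2
  have e : fac l z = (1 - z/l) * exp (z/l + (z/l)^2/2) := by
    unfold fac; congr 2; ring
  rw [e]
  refine this.trans ?_
  rw [norm_div, div_eq_mul_inv, mul_pow, ← mul_assoc]
  gcongr

lemma fac_diff (l : ℂ) : Differentiable ℂ (fac l) := by
  unfold fac
  fun_prop

lemma mult_loc (r : ℝ) :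
    MultipliableLocallyUniformlyOn (fun (l : L.lattice) z => fac l z) (Metric.ball (0:ℂ) r) := by
  have := Summable.multipliableLocallyUniformlyOn_one_add (K := Metric.ball (0:ℂ) r)
    (f := fun (l : L.lattice) z => fac l z - 1) Metric.isOpen_ball
    ((summ3 L).mul_left (20 * r^3)) (fac_bound L r)
    (fun l => ((fac_diff l).continuous.sub continuous_const).continuousOn)
  simpa using this

lemma PP_diff : Differentiable ℂ (PP L) := by
  intro z
  have h := (mult_loc L (‖z‖+1)).hasProdLocallyUniformlyOn
  rw [hasProdLocallyUniformlyOn_iff_tendstoLocallyUniformlyOn] at h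
  have := h.differentiableOn (Eventually.of_forall fun s => by
    exact (Differentiable.fun_finsetProd (f := fun (l : L.lattice) z => fac l z) fun i _ => fac_diff i).differentiableOn) Metric.isOpen_ball
  exact this.differentiableAt (Metric.isOpen_ball.mem_nhds (by simp))

lemma fac_ne (l z : ℂ) (h : z = l → l = 0) : fac l z ≠ 0 := by
  by_cases hl : l = 0
  · subst hl; simp [fac_zero]
  · have : z ≠ l := fun h' => hl (h h')
    unfold fac
    refine mul_ne_zero ?_ (exp_ne_zero _)
    rw [sub_ne_zero]
    intro h'
    rw [eq_div_iff hl] at h'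
    exact this (by simpa using h'.symm)

lemma PP_ne (z : ℂ) (h : z ∈ L.lattice → z = 0) : PP L z ≠ 0 := by
  have := tprod_one_add_ne_zero_of_summable (f := fun l : L.lattice => fac l z - 1) ?_ ?_
  · simpa [PP] using this
  · intro l
    rw [add_sub_cancel]
    apply fac_ne
    rintro rfl
    exact h l.2
  · refine Summable.of_norm_bounded_eventually ((summ3 L).mul_left (20 * (‖z‖+1)^3)) ?_
    filter_upwards [fac_bound L (‖z‖+1)] with l hl
    simpa using hl z (by simp)

lemma logDeriv_fac (l z : ℂ) (hl : l ≠ 0) (h : z ≠ l) :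
    logDeriv (fac l) z = 1/(z - l) + 1/l + z/l^2 := by
  have hzl : z - l ≠ 0 := sub_ne_zero.2 h
  have hd : HasDerivAt (fac l) ((-(1/l)) * exp (z / l + z^2 / (2 * l^2)) +
      (1 - z/l) * (exp (z / l + z^2 / (2 * l^2)) * (1/l + (2*z)/(2*l^2)))) z := by
    unfold fac
    have h1 : HasDerivAt (fun z : ℂ => z / l) (1/l) z := (hasDerivAt_id z).div_const l
    have h2 : HasDerivAt (fun z : ℂ => z^2 / (2*l^2)) ((2*z)/(2*l^2)) z := by
      simpa using (hasDerivAt_pow 2 z).div_const (2*l^2)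
    exact (h1.const_sub 1).mul ((h1.add h2).cexp)
  rw [logDeriv_apply, hd.deriv]
  unfold fac
  have : 1 - z / l ≠ 0 := by
    rw [sub_ne_zero]; intro h'; rw [eq_div_iff hl] at h'; exact h (by simpa using h'.symm)
  have he := exp_ne_zero (z / l + z^2 / (2 * l^2))
  have hlz : l - z ≠ 0 := sub_ne_zero.2 (Ne.symm h)
  generalize exp (z / l + z^2 / (2 * l^2)) = e at *
  rw [div_eq_iff (mul_ne_zero this he)]
  field_simp
  ring

/-- terms of the zeta series -/
noncomputable def TT (z l : ℂ) : ℂ := 1/(z-l) + 1/l + z/l^2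

lemma TT_summable (z : ℂ) : Summable fun l : L.lattice => TT z l := by
  refine Summable.of_norm_bounded_eventually ((summ3 L).mul_left (2 * ‖z‖^2)) ?_
  refine (finite_lattice L (2 * ‖z‖)).subset ?_
  intro l hl
  by_contra h
  apply hl
  simp only [Set.mem_ofPred_eq, not_le] at h
  have hl0 : 0 < ‖(l:ℂ)‖ := by linarith [norm_nonneg z]
  have hl0' : (l:ℂ) ≠ 0 := norm_pos_iff.1 hl0
  have h2 : ‖(l:ℂ)‖/2 ≤ ‖z - l‖ := by
    have := norm_sub_norm_le (l:ℂ) z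
    rw [norm_sub_rev] at this
    linarith
  have hzl : z - l ≠ 0 := norm_pos_iff.1 (by linarith)
  have e : TT z l = z^2 * ((l:ℂ)⁻¹^2 * (z-l)⁻¹) := by
    unfold TT; field_simp; ring
  change ‖TT z l‖ ≤ 2 * ‖z‖ ^ 2 * ‖(l:ℂ)‖⁻¹ ^ 3
  rw [e]
  simp only [norm_mul, norm_pow, norm_inv]
  have : ‖z - l‖⁻¹ ≤ 2 * ‖(l:ℂ)‖⁻¹ := by
    rw [← div_eq_mul_inv, inv_eq_one_div, div_le_div_iff₀ (by linarith) hl0]; linarith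
  calc _ ≤ ‖z‖^2 * (‖(l:ℂ)‖⁻¹^2 * (2 * ‖(l:ℂ)‖⁻¹)) := by gcongr
    _ = _ := by ring

noncomputable def ZZ (z : ℂ) : ℂ := ∑' l : L.lattice, TT z l

lemma logDeriv_PP (z : ℂ) (hz : z ∉ L.lattice) : logDeriv (PP L) z = ZZ L z - 1/z := by
  classical
  have hterm : ∀ l : L.lattice, logDeriv (fac l) z = TT z l - (if l = 0 then 1/z else 0) := by
    intro l
    by_cases hl : l = 0
    · subst hl
      have : fac ((0 : L.lattice) : ℂ) = fun _ => 1 := by ext z; simp [fac_zero]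
      rw [this]
      simp [TT]
    · rw [if_neg hl, sub_zero, logDeriv_fac]
      · rfl
      · simpa using hl
      · rintro rfl; exact hz l.2
  have hs : Summable fun l : L.lattice => (if l = 0 then 1/z else 0) :=
    (hasSum_ite_eq (0 : L.lattice) (1/z)).summable
  have := logDeriv_tprod_eq_tsum (s := Metric.ball (0:ℂ) (‖z‖+1)) Metric.isOpen_ball (x := z)
    (by simp) (f := fun (l : L.lattice) z => fac l z)
    (fun l => fac_ne _ _ (by rintro rfl; exact absurd l.2 hz))
    (fun l => (fac_diff l).differentiableOn)
    (by simp_rw [hterm]; exact (TT_summable L z).sub hs)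
    (mult_loc L _) (PP_ne L z (fun h => absurd h hz))
  unfold PP
  rw [this]
  simp_rw [hterm]
  rw [(TT_summable L z).tsum_sub hs, tsum_ite_eq]
  rfl

lemma sigma_diff : Differentiable ℂ (wSigma L.ω₁ L.ω₂) := by
  rw [show wSigma L.ω₁ L.ω₂ = fun z => z * PP L z from funext (wSigma_eq L)]
  exact differentiable_id.mul (PP_diff L)

lemma sigma_ne (z : ℂ) (hz : z ∉ L.lattice) : wSigma L.ω₁ L.ω₂ z ≠ 0 := by
  rw [wSigma_eq]
  exact mul_ne_zero (by rintro rfl; exact hz (zero_mem _)) (PP_ne L z (fun h => absurd h hz))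

lemma wZeta_eq (z : ℂ) (hz : z ∉ L.lattice) : wZeta L.ω₁ L.ω₂ z = ZZ L z := by
  have hz0 : z ≠ 0 := by rintro rfl; exact hz (zero_mem _)
  unfold wZeta
  rw [← logDeriv_apply, show wSigma L.ω₁ L.ω₂ = fun z => z * PP L z from funext (wSigma_eq L),
    logDeriv_mul (f := fun z => z) _ hz0 (PP_ne L z (fun h => absurd h hz)) differentiableAt_id (PP_diff L z),
    logDeriv_PP L z hz]
  simp

lemma wZeta_eq' (z : ℂ) (hz : z ∉ L.lattice) : wZeta L.ω₁ L.ω₂ z = 1/z + logDeriv (PP L) z := by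
  rw [wZeta_eq L z hz, logDeriv_PP L z hz]; ring

end TorusAux

namespace TorusAux
open Complex Filter Topology
variable (L : PeriodPair)

lemma ZZ_shift (w : L.lattice) (z z' : ℂ) : ZZ L (z + w) - ZZ L z = ZZ L (z' + w) - ZZ L z' := by
  set q : L.lattice → ℂ := fun l => (z - z') * (1/(l:ℂ)^2 - 1/((l:ℂ) - w)^2) with hq
  have hG : Summable fun l : L.lattice => TT z l - TT z' l := (TT_summable L z).sub (TT_summable L z')
  have hG' : Summable fun l : L.lattice => TT z (l - w : L.lattice) - TT z' (l - w : L.lattice) :=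
    (Equiv.subRight w).summable_iff.2 hG
  have hGs : ∑' l : L.lattice, (TT z (l - w : L.lattice) - TT z' (l - w : L.lattice)) =
      ∑' l : L.lattice, (TT z l - TT z' l) :=
    (Equiv.subRight w).tsum_eq (fun l : L.lattice => TT z l - TT z' l)
  have hH : Summable fun l : L.lattice => TT (z + w) l - TT (z' + w) l :=
    (TT_summable L (z+w)).sub (TT_summable L (z'+w))
  have hqe : ∀ l : L.lattice, q l = (TT (z + w) l - TT (z' + w) l) -
      (TT z (l - w : L.lattice) - TT z' (l - w : L.lattice)) := by
    intro l
    simp only [hq, TT, AddSubgroupClass.coe_sub]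
    rw [show z - ((l:ℂ) - w) = z + w - l by ring, show z' - ((l:ℂ) - w) = z' + w - l by ring]
    ring
  have hq0 : ∑' l, q l = 0 := by
    have h1 : ∑' l, q l = ∑' l, q (w - l) := ((Equiv.subLeft w).tsum_eq q).symm
    have h2 : ∀ l, q (w - l) = - q l := by
      intro l
      simp only [hq, AddSubgroupClass.coe_sub]
      rw [show (w:ℂ) - l - w = -l by ring, show (w:ℂ) - l = -(l - w) by ring, neg_sq, neg_sq]
      ring
    simp_rw [h2] at h1
    rw [tsum_neg] at h1
    linear_combination h1 / 2
  have := hH.tsum_sub hG'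
  simp_rw [← hqe] at this
  rw [hq0, hGs, (TT_summable L z).tsum_sub (TT_summable L z'),
    (TT_summable L (z+w)).tsum_sub (TT_summable L (z'+w))] at this
  unfold ZZ
  linear_combination -this

lemma ZZ_neg (z : ℂ) : ZZ L (-z) = - ZZ L z := by
  unfold ZZ
  rw [← (Equiv.neg L.lattice).tsum_eq, ← tsum_neg]
  apply tsum_congr
  intro l
  simp only [Equiv.neg_apply, TT, NegMemClass.coe_neg]
  rw [show -z - -(l:ℂ) = -(z - l) by ring, neg_sq]
  simp only [one_div, inv_neg]
  ring

lemma PP_neg (z : ℂ) : PP L (-z) = PP L z := by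
  unfold PP
  rw [← (Equiv.neg L.lattice).tprod_eq]
  apply tprod_congr
  intro l
  simp only [Equiv.neg_apply, fac, NegMemClass.coe_neg, neg_sq, neg_div_neg_eq]

lemma sigma_neg (z : ℂ) : wSigma L.ω₁ L.ω₂ (-z) = - wSigma L.ω₁ L.ω₂ z := by
  rw [wSigma_eq, wSigma_eq, PP_neg]; ring

lemma half_notMem {w : ℂ} (h : w / 2 ∉ L.lattice) : -(w/2) ∉ L.lattice := by
  simpa using h

lemma ZZ_add (w : L.lattice) (hw : (w:ℂ) / 2 ∉ L.lattice) (z : ℂ) :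
    ZZ L (z + w) = ZZ L z + 2 * wZeta L.ω₁ L.ω₂ (w / 2) := by
  have := ZZ_shift L w z (-(w/2))
  rw [ZZ_neg, show -((w:ℂ)/2) + w = w/2 by ring] at this
  rw [wZeta_eq L _ hw]
  linear_combination this

lemma sigma_hasDeriv (z : ℂ) (hz : z ∉ L.lattice) :
    HasDerivAt (wSigma L.ω₁ L.ω₂) (ZZ L z * wSigma L.ω₁ L.ω₂ z) z := by
  have := (sigma_diff L z).hasDerivAt
  rw [← wZeta_eq L z hz, wZeta, div_mul_cancel₀ _ (sigma_ne L z hz)]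
  exact this

lemma add_notMem (w : L.lattice) {z : ℂ} (hz : z ∉ L.lattice) : z + w ∉ L.lattice := by
  rwa [Submodule.add_mem_iff_left _ w.2]

lemma countable_lattice : (L.lattice : Set ℂ).Countable := by
  have : Countable L.lattice := L.latticeEquivProd.toEquiv.countable_iff.2 inferInstance
  exact this.to_set

lemma sigma_add (w : L.lattice) (hw : (w:ℂ) / 2 ∉ L.lattice) (z : ℂ) (hz : z ∉ L.lattice) :
    wSigma L.ω₁ L.ω₂ (z + w) = - exp (2 * wZeta L.ω₁ L.ω₂ (w / 2) * (z + w/2)) * wSigma L.ω₁ L.ω₂ z := by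
  set η := 2 * wZeta L.ω₁ L.ω₂ (w / 2) with hη
  set s := wSigma L.ω₁ L.ω₂ with hs
  let g : ℂ → ℂ := fun z => s (z + w) * exp (-(η * z)) / s z
  have hU : IsOpen ((L.lattice : Set ℂ)ᶜ) := L.isClosed_lattice.isOpen_compl
  have hP : IsPreconnected ((L.lattice : Set ℂ)ᶜ) :=
    (Set.Countable.isConnected_compl_of_one_lt_rank (by simp) (countable_lattice L)).2
  have hg : ∀ z ∉ L.lattice, HasDerivAt g 0 z := by
    intro z hz
    have h1 := sigma_hasDeriv L z hz
    have h2 := (sigma_hasDeriv L (z+w) (add_notMem L w hz)).comp_add_const z w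
    have h3 : HasDerivAt (fun z : ℂ => exp (-(η * z))) (exp (-(η * z)) * (-(η * 1))) z :=
      (((hasDerivAt_id z).const_mul η).neg).cexp
    have hne := sigma_ne L z hz
    have := (h2.mul h3).div h1 hne
    refine this.congr_deriv ?_
    rw [ZZ_add L w hw]
    rw [div_eq_zero_iff]; left
    simp only [Pi.mul_apply]
    ring
  have hconst := hU.is_const_of_deriv_eq_zero hP
    (fun z hz => (hg z hz).differentiableAt.differentiableWithinAt)
    (fun z hz => (hg z hz).deriv) (x := z) (y := -(w/2)) hz (half_notMem L hw)
  have hne := sigma_ne L z hz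
  have hne2 := sigma_ne L _ hw
  simp only [g] at hconst
  rw [show -((w:ℂ)/2) + w = w/2 by ring, hs, sigma_neg, mul_div_assoc, mul_div_assoc] at hconst
  rw [← hs] at *
  have h4 : s (z + w) * exp (-(η * z)) = - exp (η * (w/2)) * s z := by
    rw [← div_eq_iff hne, mul_div_assoc, hconst]
    rw [mul_neg, neg_neg]; field_simp
  have h5 : exp (-(η*z)) * exp (η * z) = 1 := by rw [← exp_add]; simp
  calc s (z + w) = s (z+w) * exp (-(η*z)) * exp (η * z) := by rw [mul_assoc, h5, mul_one]
    _ = _ := by rw [h4, mul_add, exp_add]; ring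
end TorusAux

namespace TorusAux
open Complex Filter Topology MeasureTheory
lemma log_neg_im_pos {z : ℂ} (h : 0 < z.im) : log (-z) = log z - Real.pi * I := by
  apply Complex.ext
  · simp [log_re]
  · simp [log_im, arg_neg_eq_arg_sub_pi_of_im_pos h]

lemma log_neg_im_neg {z : ℂ} (h : z.im < 0) : log (-z) = log z + Real.pi * I := by
  apply Complex.ext
  · simp [log_re]
  · simp [log_im, arg_neg_eq_arg_add_pi_of_im_neg h]

lemma ne_of_im {z : ℂ} (h : z.im ≠ 0) : z ≠ 0 := by rintro rfl; simp at h
lemma ne_of_re {z : ℂ} (h : z.re ≠ 0) : z ≠ 0 := by rintro rfl; simp at h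

lemma int_horiz (p q d : ℝ) (hd : d ≠ 0) :
    ∫ x in p..q, 1 / ((x:ℂ) + d * I) = log (q + d * I) - log (p + d * I) := by
  rw [intervalIntegral.integral_eq_sub_of_hasDerivAt (f := fun x : ℝ => log (x + d * I))]
  · intro x _
    have h1 : HasDerivAt (fun x : ℝ => (x:ℂ) + d * I) 1 x := (hasDerivAt_id x).ofReal_comp.add_const _
    exact h1.clog_real (by right; simpa using hd)
  · apply Continuous.intervalIntegrable
    refine continuous_const.div (by fun_prop) fun x => ne_of_im (by simpa using hd)

lemma int_vert (c p q : ℝ) (hc : 0 < c) :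
    I * ∫ y in p..q, 1 / ((c:ℂ) + y * I) = log (c + q * I) - log (c + p * I) := by
  rw [← intervalIntegral.integral_const_mul,
    intervalIntegral.integral_eq_sub_of_hasDerivAt (f := fun y : ℝ => log (c + y * I))]
  · intro x _
    have h1 : HasDerivAt (fun y : ℝ => (c:ℂ) + y * I) (1 * I) x :=
      ((hasDerivAt_id x).ofReal_comp.mul_const I).const_add _
    have := h1.clog_real (by left; simpa using hc)
    refine this.congr_deriv (by ring)
  · apply Continuous.intervalIntegrable
    refine continuous_const.mul (continuous_const.div (by fun_prop) fun x => ne_of_re ?_)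
    simpa using hc.ne'

lemma int_vert' (c p q : ℝ) (hc : 0 < c) :
    I * ∫ y in p..q, 1 / ((-c:ℂ) + y * I) = log (c - q * I) - log (c - p * I) := by
  rw [← intervalIntegral.integral_const_mul,
    intervalIntegral.integral_eq_sub_of_hasDerivAt (f := fun y : ℝ => log (c - y * I))]
  · intro x _
    have h1 : HasDerivAt (fun y : ℝ => (c:ℂ) - y * I) (-(1 * I)) x :=
      ((hasDerivAt_id x).ofReal_comp.mul_const I).const_sub _
    have := h1.clog_real (by left; simpa using hc)
    refine this.congr_deriv ?_
    rw [show (-c:ℂ) + x * I = -(c - x * I) by ring, one_div, inv_neg]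
    ring
  · apply Continuous.intervalIntegrable
    refine continuous_const.mul (continuous_const.div (by fun_prop) fun x => ne_of_re ?_)
    simpa using hc.ne'

lemma rect_inv (c d : ℝ) (hc : 0 < c) (hd : 0 < d) :
    (∫ x in (-c)..c, 1 / ((x:ℂ) + (-d : ℝ) * I)) - (∫ x in (-c)..c, 1 / ((x:ℂ) + d * I))
     + I * (∫ y in (-d)..d, 1 / ((c:ℂ) + y * I)) - I * (∫ y in (-d)..d, 1 / ((-c:ℂ) + y * I))
     = 2 * Real.pi * I := by
  rw [int_horiz _ _ _ (by linarith), int_horiz _ _ _ hd.ne', int_vert _ _ _ hc, int_vert' _ _ _ hc]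
  have e1 : log (((-c : ℝ):ℂ) + (-d : ℝ) * I) = log (c + d * I) - Real.pi * I := by
    rw [← log_neg_im_pos (by simpa using hd)]; congr 1; push_cast; ring
  have e2 : log (((-c : ℝ):ℂ) + d * I) = log (c - d * I) + Real.pi * I := by
    rw [← log_neg_im_neg (by simpa using hd)]; congr 1; push_cast; ring
  rw [e1, e2]
  push_cast
  rw [show (c:ℂ) + -d * I = c - d * I by ring, show (c:ℂ) - -d * I = c + d * I by ring]
  ring

variable (L : PeriodPair)

lemma notMem_im (h2 : 0 < L.ω₂.im) (h1 : L.ω₁.im = 0) (z : ℂ)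
    (hz : z.im = -(L.ω₂.im/2)) : z ∉ L.lattice := by
  intro h
  obtain ⟨m, n, rfl⟩ := PeriodPair.mem_lattice.1 h
  simp [h1] at hz
  have : (n:ℝ) = -(1/2) := by field_simp at hz ⊢; nlinarith
  have : (2 * n : ℤ) = -1 := by exact_mod_cast (by push_cast; linarith : ((2 * n : ℤ):ℝ) = -1)
  omega

lemma mem_rect (h1' : 0 < L.ω₁.re) (h2 : 0 < L.ω₂.im) (h1 : L.ω₁.im = 0) (z : ℂ)
    (hi : |z.im| ≤ L.ω₂.im/2) (hr : |z.re| ≤ L.ω₁.re/2) (h : z ∈ L.lattice) : z = 0 := by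
  obtain ⟨m, n, rfl⟩ := PeriodPair.mem_lattice.1 h
  have hn : n = 0 := by
    simp [h1, abs_mul, abs_of_pos h2] at hi
    have : |(n:ℝ)| < 1 := by nlinarith
    exact_mod_cast Int.abs_lt_one_iff.1 (by exact_mod_cast this)
  subst hn
  have hm : m = 0 := by
    simp [abs_mul, abs_of_pos h1'] at hr
    have : |(m:ℝ)| < 1 := by nlinarith
    exact_mod_cast Int.abs_lt_one_iff.1 (by exact_mod_cast this)
  subst hm
  simp

lemma ZZ_cont : ContinuousOn (ZZ L) (L.lattice : Set ℂ)ᶜ := by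
  have hc : ContinuousOn (fun z => deriv (wSigma L.ω₁ L.ω₂) z / wSigma L.ω₁ L.ω₂ z) (L.lattice : Set ℂ)ᶜ := by
    refine ContinuousOn.div ?_ (sigma_diff L).continuous.continuousOn (fun z hz => sigma_ne L z hz)
    exact ((sigma_diff L).contDiff (n := 1)).continuous_deriv le_rfl |>.continuousOn
  refine hc.congr fun z hz => (wZeta_eq L z hz).symm

lemma lPP_diff (z : ℂ) (h : z ∈ L.lattice → z = 0) : DifferentiableAt ℂ (logDeriv (PP L)) z := by
  have : AnalyticAt ℂ (PP L) z := (PP_diff L).analyticAt z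
  have h2 := (this.deriv.div this (PP_ne L z h)).differentiableAt
  exact h2

lemma legendre (h1 : L.ω₁.im = 0) (h1' : 0 < L.ω₁.re) (h2 : 0 < L.ω₂.im) :
    2 * wZeta L.ω₁ L.ω₂ (L.ω₁/2) * L.ω₂ - 2 * wZeta L.ω₁ L.ω₂ (L.ω₂/2) * L.ω₁ = 2 * Real.pi * I := by
  set η₁ := 2 * wZeta L.ω₁ L.ω₂ (L.ω₁/2) with hη₁
  set η₂ := 2 * wZeta L.ω₁ L.ω₂ (L.ω₂/2) with hη₂
  have Z1 : ∀ z, ZZ L (z + L.ω₁) = ZZ L z + η₁ := fun z =>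
    ZZ_add L ⟨L.ω₁, L.ω₁_mem_lattice⟩ L.ω₁_div_two_notMem_lattice z
  have Z2 : ∀ z, ZZ L (z + L.ω₂) = ZZ L z + η₂ := fun z =>
    ZZ_add L ⟨L.ω₂, L.ω₂_mem_lattice⟩ L.ω₂_div_two_notMem_lattice z
  obtain ⟨c, hc⟩ : ∃ c, c = L.ω₁.re/2 := ⟨_, rfl⟩
  obtain ⟨d, hd⟩ : ∃ d, d = L.ω₂.im/2 := ⟨_, rfl⟩
  obtain ⟨r, hr⟩ : ∃ r, r = L.ω₂.re := ⟨_, rfl⟩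
  have hc0 : 0 < c := by linarith
  have hd0 : 0 < d := by linarith
  have hw1 : L.ω₁ = 2 * c := by
    apply Complex.ext <;> simp [hc, h1]; ring
  have hw2 : L.ω₂ = r + 2 * d * I := by
    apply Complex.ext <;> simp [hd, hr]; ring
  have hbox : ∀ z : ℂ, |z.im| ≤ d → |z.re| ≤ c → z ∈ L.lattice → z = 0 := fun z hi hr h =>
    mem_rect L h1' h2 h1 z (hd ▸ hi) (hc ▸ hr) h
  have habs : ∀ {x e : ℝ}, x ∈ Set.uIcc (-e) e → 0 < e → |x| ≤ e := by
    intro x e hx he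
    rw [Set.uIcc_of_le (by linarith)] at hx
    exact abs_le.2 hx
  -- horizontal membership
  have hbot : ∀ x : ℝ, (x:ℂ) + (-d : ℝ) * I ∉ L.lattice := fun x =>
    notMem_im L h2 h1 _ (by simp [hd])
  have hcau := integral_boundary_rect_eq_zero_of_differentiableOn (logDeriv (PP L))
    (⟨-c, -d⟩ : ℂ) (⟨c, d⟩ : ℂ) (by
      intro z hz
      refine (lPP_diff L z (hbox z ?_ ?_)).differentiableWithinAt
      · exact habs hz.2 hd0
      · exact habs hz.1 hc0)
  simp only [smul_eq_mul] at hcau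
  have hinv := rect_inv c d hc0 hd0
  -- combine
  have comb : ∀ (e p : ℝ) (γ : ℝ → ℂ), 0 < p → Continuous γ →
      (∀ x ∈ Set.uIcc (-p) p, |(γ x).im| ≤ d ∧ |(γ x).re| ≤ c ∧ γ x ≠ 0) →
      ∫ x in (-p)..p, ZZ L (γ x) = (∫ x in (-p)..p, 1 / γ x) + ∫ x in (-p)..p, logDeriv (PP L) (γ x) := by
    intro e p γ hp hγ hb
    rw [← intervalIntegral.integral_add]
    · apply intervalIntegral.integral_congr
      intro x hx
      obtain ⟨b1, b2, b3⟩ := hb x hx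
      have : γ x ∉ L.lattice := fun h => b3 (hbox _ b1 b2 h)
      simp only [logDeriv_PP L _ this]; ring
    · apply ContinuousOn.intervalIntegrable
      exact continuousOn_const.div hγ.continuousOn fun x hx => (hb x hx).2.2
    · apply ContinuousOn.intervalIntegrable
      intro x hx
      obtain ⟨b1, b2, b3⟩ := hb x hx
      exact (ContinuousAt.comp (g := logDeriv (PP L)) (lPP_diff L (γ x) (hbox _ b1 b2)).continuousAt hγ.continuousAt).continuousWithinAt
  have c1 := comb 0 c (fun x => (x:ℂ) + (-d:ℝ) * I) hc0 (by fun_prop) (fun x hx =>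
    ⟨by simp [abs_of_pos hd0], by simpa using habs hx hc0, ne_of_im (by simpa using hd0.ne')⟩)
  have c2 := comb 0 c (fun x => (x:ℂ) + d * I) hc0 (by fun_prop) (fun x hx =>
    ⟨by simp [abs_of_pos hd0], by simpa using habs hx hc0, ne_of_im (by simpa using hd0.ne')⟩)
  have c3 := comb 0 d (fun x => (c:ℂ) + x * I) hd0 (by fun_prop) (fun x hx =>
    ⟨by simpa using habs hx hd0, by simp [abs_of_pos hc0], ne_of_re (by simpa using hc0.ne')⟩)
  have c4 := comb 0 d (fun x => (-c:ℂ) + x * I) hd0 (by fun_prop) (fun x hx =>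
    ⟨by simpa using habs hx hd0, by simp [abs_of_pos hc0], ne_of_re (by simpa using hc0.ne')⟩)
  -- vertical
  have contV : ContinuousOn (fun y : ℝ => ZZ L ((-c:ℂ) + y * I)) (Set.uIcc (-d) d) := by
    refine (ZZ_cont L).comp (by fun_prop) fun x hx h => ?_
    have := hbox _ (by simpa using habs hx hd0) (by simp [abs_of_pos hc0]) h
    exact ne_of_re (by simpa using hc0.ne') this
  have v : ∫ y in (-d)..d, ZZ L ((c:ℂ) + y * I) = (∫ y in (-d)..d, ZZ L ((-c:ℂ) + y * I)) + 2 * d * η₁ := by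
    have : ∀ y : ℝ, ZZ L ((c:ℂ) + y * I) = ZZ L ((-c:ℂ) + y * I) + η₁ := by
      intro y; rw [← Z1, hw1]; congr 1; ring
    simp_rw [this]
    rw [intervalIntegral.integral_add contV.intervalIntegrable (by simp), intervalIntegral.integral_const]
    rw [real_smul]; push_cast; ring
  -- horizontal
  let B : ℝ → ℂ := fun x => ZZ L ((x:ℂ) + (-d:ℝ) * I)
  have contB : Continuous B := by
    rw [← continuousOn_univ]
    exact (ZZ_cont L).comp (by fun_prop) fun x _ => hbot x
  have hBper : ∀ x, B (x + 2 * c) = B x + η₁ := by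
    intro x; simp only [B]; rw [← Z1, hw1]; congr 1; push_cast; ring
  have htop : ∀ x : ℝ, ZZ L ((x:ℂ) + d * I) = B (x - r) + η₂ := by
    intro x; simp only [B]; rw [← Z2, hw2]; congr 1; push_cast; ring
  have hper : Function.Periodic (fun x : ℝ => B x - η₁ / (2 * c) * x) (2 * c) := by
    intro x
    have : (c:ℂ) ≠ 0 := by exact_mod_cast hc0.ne'
    simp only [hBper]
    push_cast
    field_simp
    ring
  have hpi := hper.intervalIntegral_add_eq (-c) (-c - r)
  have contX : Continuous fun x : ℝ => η₁ / (2 * c) * (x:ℂ) := by fun_prop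
  rw [intervalIntegral.integral_sub (contB.intervalIntegrable _ _) (contX.intervalIntegrable _ _),
    intervalIntegral.integral_sub (contB.intervalIntegrable _ _) (contX.intervalIntegrable _ _),
    intervalIntegral.integral_const_mul, intervalIntegral.integral_const_mul,
    intervalIntegral.integral_ofReal, intervalIntegral.integral_ofReal, integral_id, integral_id,
    show -c + 2 * c = c by ring, show -c - r + 2 * c = c - r by ring] at hpi
  have ht : ∫ x in (-c)..c, ZZ L ((x:ℂ) + d * I) = (∫ x in (-c-r)..(c-r), B x) + 2 * c * η₂ := by
    simp_rw [htop]
    have : Continuous fun x => B (x - r) := by fun_prop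
    rw [intervalIntegral.integral_add (this.intervalIntegrable _ _) (by simp),
      intervalIntegral.integral_comp_sub_right (fun x => B x), intervalIntegral.integral_const]
    rw [real_smul]; push_cast; ring
  have hcc : (c:ℂ) ≠ 0 := by exact_mod_cast hc0.ne'
  have hx : η₁ / (2 * c) * (((c^2 - (-c)^2)/2 : ℝ):ℂ) - η₁ / (2 * c) * ((((c-r)^2 - (-c-r)^2)/2 : ℝ):ℂ) = η₁ * r := by
    push_cast; field_simp; ring
  rw [ht] at c2
  rw [v] at c3
  change ∫ x in (-c)..c, B x = _ at c1
  simp only [ofReal_neg] at *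
  rw [hw1, hw2]
  push_cast at *
  linear_combination hcau + hinv - hpi - hx + c1 - c2 + I * c3 - I * c4
end TorusAux

namespace TorusAux
open Complex Filter Topology MeasureTheory
variable (L : PeriodPair)

noncomputable def VV (z : ℂ) : ℝ := Real.log ‖sigmaStar L.ω₁ L.ω₂ z‖ - ‖z‖^2

lemma VV_step (w : L.lattice) (hw : (w:ℂ) / 2 ∉ L.lattice)
    (hb : 2 * bconst L.ω₁ L.ω₂ * w + 2 * wZeta L.ω₁ L.ω₂ (w/2) = 2 * (starRingEnd ℂ) w)
    (z : ℂ) (hz : z ∉ L.lattice) : VV L (z + w) = VV L z := by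
  unfold VV sigmaStar
  rw [sigma_add L w hw z hz]
  have hs := norm_ne_zero_iff.2 (sigma_ne L z hz)
  simp only [norm_mul, norm_neg, norm_exp]
  rw [Real.log_mul (Real.exp_ne_zero _) (by simp [hs]), Real.log_mul (Real.exp_ne_zero _) hs,
    Real.log_mul (Real.exp_ne_zero _) hs, Real.log_exp, Real.log_exp, Real.log_exp]
  have e : bconst L.ω₁ L.ω₂ * (z + w)^2 + 2 * wZeta L.ω₁ L.ω₂ (w/2) * (z + w/2) =
      bconst L.ω₁ L.ω₂ * z^2 + 2 * (starRingEnd ℂ) w * (z + w/2) := by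
    linear_combination (z + w/2) * hb
  have e' := congrArg re e
  simp only [add_re] at e'
  have : (2 * (starRingEnd ℂ) (w:ℂ) * (z + w/2)).re = ‖z + w‖^2 - ‖z‖^2 := by
    rw [← normSq_eq_norm_sq, ← normSq_eq_norm_sq, normSq_apply, normSq_apply]
    simp
    ring
  rw [this] at e'
  linarith

variable (h1 : L.ω₁.im = 0) (h1' : 0 < L.ω₁.re) (h2 : 0 < L.ω₂.im)
    (harea : L.ω₁.re * L.ω₂.im = Real.pi / 2)

include h1 h1' h2 harea in
lemma VV_per (w : ℂ) (hw : w ∈ L.lattice) : ∀ z ∉ L.lattice, VV L (z + w) = VV L z := by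
  have hleg := legendre L h1 h1' h2
  have hne : L.ω₁ ≠ 0 := by intro h; rw [h] at h1'; simp at h1'
  have s1 : ∀ z ∉ L.lattice, VV L (z + L.ω₁) = VV L z :=
    VV_step L ⟨L.ω₁, L.ω₁_mem_lattice⟩ L.ω₁_div_two_notMem_lattice (by
      have : (starRingEnd ℂ) L.ω₁ = L.ω₁ := conj_eq_iff_im.2 h1
      simp only [this, bconst, lambda1]
      field_simp
      ring)
  have s2 : ∀ z ∉ L.lattice, VV L (z + L.ω₂) = VV L z :=
    VV_step L ⟨L.ω₂, L.ω₂_mem_lattice⟩ L.ω₂_div_two_notMem_lattice (by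
      have hc : (starRingEnd ℂ) L.ω₂ = L.ω₂ - 2 * L.ω₂.im * I := by
        apply Complex.ext <;> simp; ring
      have hr : L.ω₁ = L.ω₁.re := by apply Complex.ext <;> simp [h1]
      have ha : L.ω₁ * L.ω₂.im = Real.pi / 2 := by
        rw [hr]; exact_mod_cast harea
      simp only [hc, bconst, lambda1]
      field_simp
      linear_combination -hleg/2 + 2 * I * ha)
  have hw' := hw
  unfold PeriodPair.lattice at hw'
  induction hw' using Submodule.span_induction with
  | mem x hx =>
    rcases hx with rfl | rfl
    · exact s1
    · exact s2
  | zero => simp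
  | add x y hx hy ihx ihy =>
    intro z hz
    rw [← add_assoc, ihy hy _ (add_notMem L ⟨x, hx⟩ hz), ihx hx z hz]
  | smul n x hx ih =>
    have ih := ih hx
    have key : ∀ n : ℕ, ∀ z ∉ L.lattice, VV L (z + n * x) = VV L z := by
      intro n
      induction n with
      | zero => simp
      | succ n ihn =>
        intro z hz
        have : z + n * x ∉ L.lattice := by
          have hm : (n:ℂ) * x ∈ L.lattice := by
            simpa using L.lattice.smul_mem (n:ℤ) hx
          exact add_notMem L ⟨_, hm⟩ hz
        rw [show z + ((n+1 : ℕ):ℂ) * x = (z + n * x) + x by push_cast; ring, ih _ this, ihn z hz]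
    intro z hz
    obtain ⟨n, rfl | rfl⟩ := Int.eq_nat_or_neg n
    · simpa using key n z hz
    · have hz' := add_notMem L ⟨_, L.lattice.smul_mem (-(n:ℤ)) hx⟩ hz
      have := key n _ hz'
      rw [← this]
      simp
end TorusAux

namespace TorusAux
open Complex Filter Topology MeasureTheory
lemma log_int (z0 : ℂ) (r : ℝ) :
    IntegrableOn (fun z : ℂ => Real.log ‖z - z0‖) (Metric.ball z0 r) := by
  have h0 : IntegrableOn (fun z : ℂ => Real.log ‖z‖) (Metric.ball 0 r) := by
    rw [integrableOn_fun_norm_addHaar volume (f := Real.log)]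
    have : IntegrableOn (fun y : ℝ => y * Real.log y) (Set.Ioo 0 r) :=
      (Real.continuous_mul_log.continuousOn.integrableOn_Icc (a := 0) (b := r)).mono_set
        Set.Ioo_subset_Icc_self
    simpa [Complex.finrank_real_complex] using this
  have h := (measurePreserving_sub_right (volume : Measure ℂ) z0).integrableOn_comp_preimage
    (Homeomorph.subRight z0).measurableEmbedding (f := fun z : ℂ => Real.log ‖z‖)
    (s := Metric.ball 0 r)
  have h' := h.2 h0
  have e : (fun x : ℂ => x - z0) ⁻¹' Metric.ball 0 r = Metric.ball z0 r := by
    ext x; simp [dist_eq_norm]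
  rw [e] at h'
  exact h'

lemma log_norm_loc (f : ℂ → ℂ) (hf : Differentiable ℂ f) :
    LocallyIntegrable (fun z => Real.log ‖f z‖) := by
  intro z0
  have ha : AnalyticAt ℂ f z0 := hf.analyticAt z0
  have hm : Measurable (fun z => Real.log ‖f z‖) :=
    Real.measurable_log.comp hf.continuous.measurable.norm
  by_cases h : ∀ᶠ z in 𝓝 z0, f z = 0
  · refine ⟨_, h, ?_⟩
    have hz : IntegrableOn (fun _ : ℂ => (0:ℝ)) {x | f x = 0} := integrableOn_zero
    refine hz.congr_fun (fun x hx => ?_) ?_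
    · have hx : f x = 0 := hx
      simp [hx]
    · exact (isClosed_singleton.preimage hf.continuous).measurableSet (s := f ⁻¹' {0})
  · obtain ⟨n, g, hg, hg0, hfg⟩ := ha.exists_eventuallyEq_pow_smul_nonzero_iff.2 h
    have hgc : ContinuousAt (fun z => Real.log ‖g z‖) z0 :=
      (hg.continuousAt.norm).log (norm_ne_zero_iff.2 hg0)
    have hb : ∀ᶠ z in 𝓝 z0, |Real.log ‖g z‖| < |Real.log ‖g z0‖| + 1 :=
      hgc.abs.eventually (gt_mem_nhds (by linarith))
    have hn : ∀ᶠ z in 𝓝 z0, g z ≠ 0 := hg.continuousAt.eventually_ne hg0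
    obtain ⟨r, hr, hball⟩ := Metric.eventually_nhds_iff_ball.1 (hfg.and (hb.and hn))
    refine ⟨Metric.ball z0 r, Metric.ball_mem_nhds _ hr, ?_⟩
    have hi : IntegrableOn (fun z : ℂ => n * |Real.log ‖z - z0‖| + (|Real.log ‖g z0‖| + 1))
        (Metric.ball z0 r) :=
      ((log_int z0 r).abs.const_mul _).add (integrableOn_const (by
        exact measure_ball_lt_top.ne))
    refine Integrable.mono' hi hm.aestronglyMeasurable ?_
    have hne : ∀ᵐ z ∂(volume.restrict (Metric.ball z0 r)), z ≠ z0 :=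
      ae_restrict_of_ae (by simp [ae_iff])
    filter_upwards [hne, ae_restrict_mem measurableSet_ball] with z hz hzb
    obtain ⟨e1, e2, e3⟩ := hball z hzb
    rw [e1, smul_eq_mul, norm_mul, norm_pow, Real.log_mul
      (pow_ne_zero _ (norm_ne_zero_iff.2 (sub_ne_zero.2 hz))) (norm_ne_zero_iff.2 e3), Real.log_pow,
      Real.norm_eq_abs]
    refine (abs_add_le _ _).trans ?_
    rw [abs_mul, Nat.abs_cast]
    linarith

variable (L : PeriodPair)

lemma star_diff : Differentiable ℂ (sigmaStar L.ω₁ L.ω₂) := by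
  have := sigma_diff L
  unfold sigmaStar
  fun_prop

lemma VV_loc : LocallyIntegrable (VV L) := by
  unfold VV
  exact (log_norm_loc _ (star_diff L)).sub (by fun_prop : Continuous fun z : ℂ => ‖z‖^2).locallyIntegrable

lemma VV_meas : Measurable (VV L) := by
  unfold VV
  have := (star_diff L).continuous.measurable
  fun_prop

lemma VV_int (s : Set ℂ) (hs : Bornology.IsBounded s) : IntegrableOn (VV L) s :=
  ((VV_loc L).integrableOn_isCompact hs.isCompact_closure).mono_set subset_closure

/-- bounded above on bounded sets -/
lemma VV_bdd (s : Set ℂ) (hs : Bornology.IsBounded s) : ∃ C, ∀ z ∈ s, VV L z ≤ C := by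
  obtain ⟨M, hM⟩ := hs.isCompact_closure.exists_bound_of_continuousOn
    (star_diff L).continuous.continuousOn
  refine ⟨M, fun z hz => ?_⟩
  have h1 := hM z (subset_closure hz)
  have h2 : Real.log ‖sigmaStar L.ω₁ L.ω₂ z‖ ≤ ‖sigmaStar L.ω₁ L.ω₂ z‖ :=
    Real.log_le_self (norm_nonneg _)
  unfold VV
  nlinarith [sq_nonneg ‖z‖]

lemma exp_int (γ : ℝ) (hγ : 0 < γ) (s : Set ℂ) (hs : Bornology.IsBounded s) (hm : MeasurableSet s) :
    IntegrableOn (fun z => Real.exp (γ * VV L z)) s := by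
  obtain ⟨C, hC⟩ := VV_bdd L s hs
  refine Integrable.mono' (g := fun _ => Real.exp (γ * C)) (integrableOn_const hs.measure_lt_top.ne)
    (by have := VV_meas L; exact (by fun_prop : Measurable _).aestronglyMeasurable) ?_
  filter_upwards [ae_restrict_mem hm] with z hz
  rw [Real.norm_eq_abs, Real.abs_exp]
  gcongr
  exact hC z hz

lemma fund_eq : fundDomain L.ω₁ L.ω₂ = ZSpan.fundamentalDomain L.basis := by
  ext z
  rw [ZSpan.mem_fundamentalDomain]
  constructor
  · rintro ⟨p, ⟨hp1, hp2⟩, rfl⟩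
    have e : (p.1:ℂ) * L.ω₁ + (p.2:ℂ) * L.ω₂ = p.1 • L.basis 0 + p.2 • L.basis 1 := by simp
    intro i
    simp only [e, map_add, map_smul, Module.Basis.repr_self]
    fin_cases i
    · simpa using hp1
    · simpa using hp2
  · intro h
    refine ⟨(L.basis.repr z 0, L.basis.repr z 1), ⟨h 0, h 1⟩, ?_⟩
    have := L.basis.sum_repr z
    simpa [Fin.sum_univ_two] using this

lemma fund_bdd : Bornology.IsBounded (fundDomain L.ω₁ L.ω₂) := by
  rw [fund_eq]; exact ZSpan.fundamentalDomain_isBounded _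

lemma fund_meas : MeasurableSet (fundDomain L.ω₁ L.ω₂) := by
  rw [fund_eq]; exact ZSpan.fundamentalDomain_measurableSet _

lemma fund_vol (h1 : L.ω₁.im = 0) (h1' : 0 < L.ω₁.re) (h2 : 0 < L.ω₂.im) :
    volume.real (fundDomain L.ω₁ L.ω₂) = L.ω₁.re * L.ω₂.im := by
  rw [fund_eq, ZSpan.measureReal_fundamentalDomain L.basis volume
    Complex.orthonormalBasisOneI.toBasis, measureReal_congr (ZSpan.fundamentalDomain_ae_parallelepiped _ _)]
  have := Complex.orthonormalBasisOneI.volume_parallelepiped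
  rw [OrthonormalBasis.coe_toBasis, measureReal_def, this]
  simp [Module.Basis.det_apply, Matrix.det_fin_two, Module.Basis.toMatrix_apply, h1]
  rw [abs_of_pos h1', abs_of_pos h2]

end TorusAux

namespace TorusAux
open Complex Filter Topology MeasureTheory
open scoped Pointwise

variable (L : PeriodPair)

lemma fund_trans (f : ℂ → ℝ) (hf : ∀ w ∈ L.lattice, ∀ z, f (z + w) = f z) (a : ℂ) :
    (IntegrableOn (fun z => f (z - a)) (fundDomain L.ω₁ L.ω₂) ↔
      IntegrableOn f (fundDomain L.ω₁ L.ω₂)) ∧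
    ∫ z in fundDomain L.ω₁ L.ω₂, f (z - a) = ∫ z in fundDomain L.ω₁ L.ω₂, f z := by
  have hD : IsAddFundamentalDomain (Submodule.span ℤ (Set.range L.basis)).toAddSubgroup
      (fundDomain L.ω₁ L.ω₂) volume := by
    rw [fund_eq]; exact ZSpan.isAddFundamentalDomain' L.basis volume
  have : Countable (Submodule.span ℤ (Set.range L.basis)).toAddSubgroup := by
    have := (countable_lattice L).to_subtype
    rw [L.lattice_eq_span_range_basis] at this
    exact this
  have hD' := hD.vadd_of_comm (-a)
  have hp : ∀ (g : (Submodule.span ℤ (Set.range L.basis)).toAddSubgroup) (x : ℂ),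
      f (g +ᵥ x) = f x := by
    intro g x
    have hg : (g:ℂ) ∈ L.lattice := by
      rw [L.lattice_eq_span_range_basis]; exact g.2
    rw [← hf g hg x, add_comm]; rfl
  have e : (fun z : ℂ => z - a) ⁻¹' (-a +ᵥ fundDomain L.ω₁ L.ω₂) = fundDomain L.ω₁ L.ω₂ := by
    ext x
    simp [Set.mem_vadd_set_iff_neg_vadd_mem]
  have hmp := measurePreserving_sub_right (volume : Measure ℂ) a
  have hemb : MeasurableEmbedding (fun z : ℂ => z - a) := (Homeomorph.subRight a).measurableEmbedding
  constructor
  · rw [hD.integrableOn_iff hD' hp, ← hmp.integrableOn_comp_preimage hemb (f := f) (s := -a +ᵥ fundDomain L.ω₁ L.ω₂), e]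
    rfl
  · rw [hD.setIntegral_eq hD' hp, ← hmp.setIntegral_preimage_emb hemb f (-a +ᵥ fundDomain L.ω₁ L.ω₂), e]

variable (h1 : L.ω₁.im = 0) (h1' : 0 < L.ω₁.re) (h2 : 0 < L.ω₂.im)
    (harea : L.ω₁.re * L.ω₂.im = Real.pi / 2)

include h1 h1' h2 harea in
lemma VV_trans (φ : ℝ → ℝ) (a : ℂ) :
    (IntegrableOn (fun z => φ (VV L (z - a))) (fundDomain L.ω₁ L.ω₂) ↔
      IntegrableOn (fun z => φ (VV L z)) (fundDomain L.ω₁ L.ω₂)) ∧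
    ∫ z in fundDomain L.ω₁ L.ω₂, φ (VV L (z - a)) = ∫ z in fundDomain L.ω₁ L.ω₂, φ (VV L z) := by
  classical
  set f : ℂ → ℝ := fun z => if z ∈ L.lattice then 0 else φ (VV L z) with hfdef
  have hf : ∀ w ∈ L.lattice, ∀ z, f (z + w) = f z := by
    intro w hw z
    by_cases hz : z ∈ L.lattice
    · simp [hfdef, hz, L.lattice.add_mem hz hw]
    · have : z + w ∉ L.lattice := add_notMem L ⟨w, hw⟩ hz
      simp [hfdef, hz, this, VV_per L h1 h1' h2 harea w hw z hz]
  have key : ∀ a : ℂ, (fun z => f (z - a)) =ᵐ[volume.restrict (fundDomain L.ω₁ L.ω₂)]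
      fun z => φ (VV L (z - a)) := by
    intro a
    apply ae_restrict_of_ae
    have hc : ((fun z : ℂ => z - a) ⁻¹' (L.lattice : Set ℂ)).Countable :=
      (countable_lattice L).preimage (sub_left_injective)
    filter_upwards [hc.ae_notMem volume] with z hz
    have : z - a ∉ L.lattice := hz
    simp [hfdef, this]
  have k0 := key 0
  simp only [sub_zero] at k0
  obtain ⟨t1, t2⟩ := fund_trans L f hf a
  refine ⟨?_, ?_⟩
  · unfold IntegrableOn at t1 ⊢
    rw [← integrable_congr (key a), ← integrable_congr k0]
    exact t1
  · rw [← integral_congr_ae (key a), ← integral_congr_ae k0]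
    exact t2

include h1 h1' h2 harea in
lemma main (N : ℕ) (hN : 1 ≤ N) (β : ℝ) (hβ : 0 < β) (w : Fin N → ℂ) :
    1 ≤ 2 / Real.pi *
        ∫ z in fundDomain L.ω₁ L.ω₂, Real.exp (∑ j, β * Utorus L.ω₁ L.ω₂ z (w j)) ∧
    2 / Real.pi *
        ∫ z in fundDomain L.ω₁ L.ω₂, Real.exp (∑ j, β * Utorus L.ω₁ L.ω₂ z (w j)) ≤
      Etorus L.ω₁ L.ω₂ (β * N) ∧
    ((∀ j k, w j = w k) →
      2 / Real.pi *
          ∫ z in fundDomain L.ω₁ L.ω₂, Real.exp (∑ j, β * Utorus L.ω₁ L.ω₂ z (w j)) =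
        Etorus L.ω₁ L.ω₂ (β * N)) := by
  set D := fundDomain L.ω₁ L.ω₂ with hD
  set A := Aconst L.ω₁ L.ω₂ with hA
  have hU : ∀ z w, Utorus L.ω₁ L.ω₂ z w = VV L (z - w) - A := fun z w => rfl
  have hbd := fund_bdd L
  have hmeas := fund_meas L
  have hπ := Real.pi_pos
  have hvol : volume.real D = Real.pi / 2 := by rw [hD, fund_vol L h1 h1' h2, harea]
  have hfin : volume D ≠ ⊤ := hbd.measure_lt_top.ne
  have hVm := VV_meas L
  have hA' : ∫ z in D, VV L z = Real.pi / 2 * A := by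
    have : A = 2 / Real.pi * ∫ z in D, VV L z := rfl
    rw [this]; field_simp
  have hN0 : (0:ℝ) < N := by exact_mod_cast hN
  have hγ : 0 < β * N := by positivity
  have hUi : ∀ a, IntegrableOn (fun z => Utorus L.ω₁ L.ω₂ z a) D := by
    intro a
    simp only [hU]
    refine Integrable.sub ?_ (integrableOn_const hfin)
    exact ((VV_trans L h1 h1' h2 harea (fun x => x) a).1).2 (VV_int L _ hbd)
  have hU0 : ∀ a, ∫ z in D, Utorus L.ω₁ L.ω₂ z a = 0 := by
    intro a
    simp only [hU]
    rw [integral_sub (((VV_trans L h1 h1' h2 harea (fun x => x) a).1).2 (VV_int L _ hbd))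
      (integrableOn_const hfin), (VV_trans L h1 h1' h2 harea (fun x => x) a).2, hA']
    rw [setIntegral_const, hvol]; simp
  have hEi : ∀ a, IntegrableOn (fun z => Real.exp (β * N * Utorus L.ω₁ L.ω₂ z a)) D := by
    intro a
    simp only [hU]
    refine ((VV_trans L h1 h1' h2 harea (fun x => Real.exp (β * N * (x - A))) a).1).2 ?_
    have := (exp_int L (β * N) hγ D hbd hmeas).mul_const (Real.exp (-(β * N * A)))
    refine this.congr (.of_forall fun z => ?_)
    simp only
    rw [← Real.exp_add]; congr 1; ring
  have hE : ∀ a, ∫ z in D, Real.exp (β * N * Utorus L.ω₁ L.ω₂ z a) =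
      ∫ z in D, Real.exp (β * N * Utorus L.ω₁ L.ω₂ z 0) := by
    intro a
    simp only [hU, sub_zero]
    exact (VV_trans L h1 h1' h2 harea (fun x => Real.exp (β * N * (x - A))) a).2
  have hconv : ∀ z, Real.exp (∑ j, β * Utorus L.ω₁ L.ω₂ z (w j)) ≤
      ∑ j, (N:ℝ)⁻¹ * Real.exp (β * N * Utorus L.ω₁ L.ω₂ z (w j)) := by
    intro z
    have := convexOn_exp.map_sum_le (t := Finset.univ) (w := fun _ : Fin N => (N:ℝ)⁻¹)
      (p := fun j => β * N * Utorus L.ω₁ L.ω₂ z (w j)) (fun _ _ => by positivity)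
      (by simp [hN0.ne']) (fun _ _ => Set.mem_univ _)
    simp only [smul_eq_mul] at this
    refine le_of_eq_of_le ?_ this
    congr 1
    refine Finset.sum_congr rfl fun j _ => ?_
    field_simp
  have hSi : IntegrableOn (fun z => ∑ j, (N:ℝ)⁻¹ * Real.exp (β * N * Utorus L.ω₁ L.ω₂ z (w j))) D :=
    integrable_finsetSum _ fun j _ => (hEi (w j)).const_mul _
  have hXi : IntegrableOn (fun z => Real.exp (∑ j, β * Utorus L.ω₁ L.ω₂ z (w j))) D := by
    refine Integrable.mono' hSi ?_ (.of_forall fun z => ?_)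
    · simp only [hU]
      exact (by fun_prop : Measurable fun z => Real.exp (∑ j, β * (VV L (z - w j) - A))).aestronglyMeasurable
    · rw [Real.norm_eq_abs, Real.abs_exp]; exact hconv z
  refine ⟨?_, ?_, ?_⟩
  · have hsum : IntegrableOn (fun z => ∑ j, β * Utorus L.ω₁ L.ω₂ z (w j)) D :=
      integrable_finsetSum _ fun j _ => (hUi (w j)).const_mul _
    have hle : ∫ z in D, (1 + ∑ j, β * Utorus L.ω₁ L.ω₂ z (w j)) ≤
        ∫ z in D, Real.exp (∑ j, β * Utorus L.ω₁ L.ω₂ z (w j)) := by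
      refine integral_mono (Integrable.add (integrableOn_const hfin) hsum) hXi fun z => ?_
      simp only
      rw [add_comm]; exact Real.add_one_le_exp _
    rw [integral_add (show Integrable (fun _ => (1:ℝ)) (volume.restrict D) from integrableOn_const hfin) hsum,
      integral_finsetSum _ fun j _ => (hUi (w j)).const_mul _] at hle
    simp only [integral_const_mul, hU0] at hle
    rw [setIntegral_const, hvol] at hle
    simp at hle
    calc (1:ℝ) = 2 / Real.pi * (Real.pi / 2) := by field_simp
      _ ≤ _ := by gcongr
  · unfold Etorus
    refine mul_le_mul_of_nonneg_left ?_ (by positivity)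
    calc _ ≤ _ := integral_mono hXi hSi hconv
      _ = ∫ z in D, Real.exp (β * N * Utorus L.ω₁ L.ω₂ z 0) := by
        rw [integral_finsetSum _ fun j _ => (hEi (w j)).const_mul _]
        simp only [integral_const_mul, hE]
        rw [Finset.sum_const, Finset.card_univ, Fintype.card_fin, nsmul_eq_mul]
        field_simp
  · intro hw
    unfold Etorus
    congr 1
    rw [← hD, ← hE (w ⟨0, hN⟩)]
    congr 1
    ext z
    congr 1
    simp only [fun j => hw j ⟨0, hN⟩]
    simp
    ring

end TorusAux

/-- bounds for the exponential of a sum of torus Green functions,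
with equality in the upper bound when all points coincide. -/
theorem torus_exp_sum_bounds (ω₁ ω₂ : ℂ)
    (h1 : ω₁.im = 0) (h1' : 0 < ω₁.re) (h2 : 0 < ω₂.im)
    (harea : ω₁.re * ω₂.im = Real.pi / 2)
    (N : ℕ) (hN : 1 ≤ N) (β : ℝ) (hβ : 0 < β) (w : Fin N → ℂ) :
    1 ≤ 2 / Real.pi *
        ∫ z in fundDomain ω₁ ω₂, Real.exp (∑ j, β * Utorus ω₁ ω₂ z (w j)) ∧
    2 / Real.pi *
        ∫ z in fundDomain ω₁ ω₂, Real.exp (∑ j, β * Utorus ω₁ ω₂ z (w j)) ≤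
      Etorus ω₁ ω₂ (β * N) ∧
    ((∀ j k, w j = w k) →
      2 / Real.pi *
          ∫ z in fundDomain ω₁ ω₂, Real.exp (∑ j, β * Utorus ω₁ ω₂ z (w j)) =
        Etorus ω₁ ω₂ (β * N)) := by
  have hind : LinearIndependent ℝ ![ω₁, ω₂] := by
    rw [LinearIndependent.pair_iff]
    intro s t h
    have him := congrArg Complex.im h
    have hre := congrArg Complex.re h
    simp [h1] at him hre
    have ht : t = 0 := by rcases him with h | h; exacts [h, absurd h h2.ne']
    refine ⟨?_, ht⟩
    simp [ht] at hre
    rcases hre with h | h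
    exacts [h, absurd h h1'.ne']
  exact TorusAux.main ⟨ω₁, ω₂, hind⟩ h1 h1' h2 harea N hN β hβ w
end
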